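/- arXiv:math/0612621 — 3 statements merged into one kernel-verified Lean document; each statement's English description precedes it below -/
import Mathlib

section
/- Let g = f^k · σ in a unique factorization domain of power series with f irreducible, σ coprime to f, k ≥ 1, and let H be a derivation. If f^{2k−1} divides 3(H(g))^2 − 2g·H(H(g)), then f divides H(f), and consequently g divides H(g). -/
/-!
Write `g = f ^ k * s` with `f` prime and `f ∤ s`. Modulo `f ^ (2 * k - 1)`, the expression
`3 (H g)² - 2 g H(H g)` is `k (k + 2) s² (H f)² f ^ (2 * k - 2)`; as `k (k + 2)` is a unit in
characteristic zero, `f` divides `s² (H f)²`, hence `H f`. The Leibniz rule then gives `g ∣ H g`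
by multiplying up the prime factors of `g`.

That a power series ring over a field is a unique factorization domain is proved by induction on the
number of variables. A shear `X i ↦ X i + t ^ (w i + 1)` makes an irreducible series regular in `t`,
provided the weights are chosen so that a single one of its monomials has minimal weight.
By Weierstrass preparation it is then associated to a distinguished polynomial in `t`, which is
irreducible, hence prime, over the smaller power series ring (Gauss), and a distinguished polynomial
defines the same quotient of the polynomial ring as of the power series ring.
-/

section Derivation

variable {A R : Type*} [CommRing A] [CommRing R] [Algebra A R] (H : Derivation A R R)

theorem exists_three_mul_derivation_sq_sub_eq (f s : R) (k : ℕ) :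
    ∃ ρ : R, 3 * H (f ^ k * s) ^ 2 - 2 * (f ^ k * s) * H (H (f ^ k * s)) =
      ((k * (k + 2) : ℕ) : R) * s ^ 2 * H f ^ 2 * f ^ (2 * k - 2) + ρ * f ^ (2 * k - 1) := by
  rcases Nat.eq_zero_or_pos k with rfl | hk
  · exact ⟨3 * H s ^ 2 - 2 * s * H (H s), by simp⟩
  refine ⟨2 * k * s * H f * H s - 2 * k * s ^ 2 * H (H f) +
    f * (3 * H s ^ 2 - 2 * s * H (H s)), ?_⟩
  obtain ⟨j, rfl⟩ : ∃ j, k = j + 1 := ⟨k - 1, by omega⟩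
  rw [show 2 * (j + 1) - 2 = 2 * j by omega, show 2 * (j + 1) - 1 = 2 * j + 1 by omega]
  rcases j with _ | i <;>
  · simp only [Derivation.leibniz, Derivation.leibniz_pow, Derivation.map_natCast, smul_eq_mul,
      nsmul_eq_mul, map_add, Nat.add_sub_cancel]
    push_cast
    ring

theorem dvd_derivation_of_pow_dvd [Algebra ℚ R] [IsCancelMulZero R] {f s : R} {k : ℕ}
    (hk : k ≠ 0) (hf : Prime f) (hs : ¬ f ∣ s)
    (hdvd : f ^ (2 * k - 1) ∣
      3 * H (f ^ k * s) ^ 2 - 2 * (f ^ k * s) * H (H (f ^ k * s))) :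
    f ∣ H f := by
  obtain ⟨ρ, hρ⟩ := exists_three_mul_derivation_sq_sub_eq H f s k
  have hpow : f ^ (2 * k - 1) = f ^ (2 * k - 2) * f := by rw [← pow_succ]; congr 1; omega
  rw [hρ, dvd_add_left (dvd_mul_left _ ρ), mul_comm _ (f ^ (2 * k - 2)), hpow,
    mul_dvd_mul_iff_left (pow_ne_zero _ hf.ne_zero), mul_assoc, ← mul_pow] at hdvd
  have hunit : IsUnit ((k * (k + 2) : ℕ) : R) := by
    have hrat : IsUnit ((k * (k + 2) : ℕ) : ℚ) := by
      rw [isUnit_iff_ne_zero]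
      positivity
    simpa only [map_natCast] using hrat.map (algebraMap ℚ R)
  have hsH : f ∣ s * H f := hf.dvd_of_dvd_pow (hunit.dvd_mul_left.mp hdvd)
  exact (hf.dvd_or_dvd hsH).resolve_left hs

theorem dvd_derivation_of_forall_prime_dvd [UniqueFactorizationMonoid R] {a : R}
    (ha : ∀ p, Prime p → p ∣ a → p ∣ H p) : a ∣ H a := by
  induction a using UniqueFactorizationMonoid.induction_on_prime with
  | h₁ => simp only [map_zero, dvd_refl]
  | h₂ u hu => exact hu.dvd
  | h₃ a p _ hp ih =>
    have haH : a ∣ H a := ih fun q hq hqa => ha q hq (hqa.mul_left p)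
    have hpH : p ∣ H p := ha p hp (dvd_mul_right p a)
    rw [Derivation.leibniz, smul_eq_mul, smul_eq_mul, mul_comm a]
    exact dvd_add (mul_dvd_mul_left p haH) (mul_dvd_mul_right hpH a)

end Derivation

theorem exists_weights_forall_le_imp_eq {ι α : Type*} (A : Finset ι) (φ₀ : α → ℕ) (φ : ι → α → ℕ)
    {S : Set α} (hS : S.Nonempty) :
    ∃ w : ι → ℕ, ∃ m ∈ S, ∀ m' ∈ S,
      φ₀ m' + ∑ i ∈ A, (w i + 1) * φ i m' ≤ φ₀ m + ∑ i ∈ A, (w i + 1) * φ i m →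
        φ₀ m' = φ₀ m ∧ ∀ i ∈ A, φ i m' = φ i m := by
  classical
  induction A using Finset.induction_on generalizing S with
  | empty =>
    obtain ⟨m, hm, hmin⟩ := exists_minimalFor_of_wellFoundedLT (· ∈ S) φ₀ hS
    refine ⟨0, m, hm, fun m' hm' hle => ?_⟩
    rw [Finset.sum_empty, Finset.sum_empty, add_zero, add_zero] at hle
    exact ⟨hle.antisymm (hmin hm' hle), fun i hi => absurd hi (Finset.notMem_empty i)⟩
  | insert a A ha ih =>
    -- Minimise `φ a` first, and give it a weight exceeding the total weight of the rest.
    obtain ⟨m₀, hm₀, hmin⟩ := exists_minimalFor_of_wellFoundedLT (· ∈ S) (φ a) hS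
    obtain ⟨w, m, ⟨hmS, hma⟩, hm⟩ := ih (S := {m ∈ S | φ a m = φ a m₀}) ⟨m₀, hm₀, rfl⟩
    set N := φ₀ m + ∑ i ∈ A, (w i + 1) * φ i m with hN
    have hsum (x : α) : ∑ i ∈ insert a A, (Function.update w a N i + 1) * φ i x =
        (N + 1) * φ a x + ∑ i ∈ A, (w i + 1) * φ i x := by
      rw [Finset.sum_insert ha, Function.update_self]
      congr 1
      refine Finset.sum_congr rfl fun i hi => ?_
      rw [Function.update_of_ne (ne_of_mem_of_not_mem hi ha)]
    refine ⟨Function.update w a N, m, hmS, fun m' hm' hle => ?_⟩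
    rw [hsum, hsum, hma] at hle
    have hge : φ a m₀ ≤ φ a m' := (le_total _ _).elim id (hmin hm')
    have hlt : (N + 1) * φ a m' < (N + 1) * (φ a m₀ + 1) := by
      rw [mul_add_one]
      omega
    have hm'a : φ a m' = φ a m₀ :=
      (Nat.lt_succ_iff.mp (Nat.lt_of_mul_lt_mul_left hlt)).antisymm hge
    rw [hm'a] at hle
    obtain ⟨h₀, hA⟩ := hm m' ⟨hm', hm'a⟩ (by linarith)
    exact ⟨h₀, (Finset.forall_mem_insert _ _ _).mpr ⟨hm'a.trans hma.symm, hA⟩⟩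

noncomputable section Shear

open MvPowerSeries

variable {τ R : Type*} [CommRing R]

/-- The images of the variables under the shear `X i ↦ X i + a * t ^ (w i + 1)`, where `t` is the
distinguished variable `X none`. The exponents are `w i + 1` rather than `w i` so that every choice
of `w` gives series without constant term. -/
def shearVars (w : τ → ℕ) (a : R) : Option τ → MvPowerSeries (Option τ) R
  | none => X none
  | some i => X (some i) + C a * X none ^ (w i + 1)

theorem hasSubst_shearVars [Finite τ] (w : τ → ℕ) (a : R) : HasSubst (shearVars w a) :=
  hasSubst_of_constantCoeff_zero fun
    | none => constantCoeff_X none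
    | some i => by
      rw [shearVars, map_add, map_mul, map_pow, constantCoeff_X, constantCoeff_X,
        zero_pow (Nat.succ_ne_zero _), mul_zero, add_zero]

theorem substAlgHom_shearVars_comp_eq_id [Finite τ] (w : τ → ℕ) {a b : R} (hab : a + b = 0) :
    (substAlgHom (R := R) (hasSubst_shearVars w b)).comp
      (substAlgHom (hasSubst_shearVars w a)) = AlgHom.id R _ := by
  have hX (s : Option τ) :
      substAlgHom (R := R) (hasSubst_shearVars w b) (shearVars w a s) = X s := by
    rcases s with _ | i
    · exact substAlgHom_X _ _
    · have hC : (C b + C a : MvPowerSeries (Option τ) R) = 0 := by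
        rw [← map_add, add_comm, hab, map_zero]
      simp only [shearVars, map_add, map_mul, map_pow, substAlgHom_X, c_eq_algebraMap,
        AlgHom.commutes] at hC ⊢
      linear_combination X none ^ (w i + 1) * hC
  ext1 f
  rw [AlgHom.comp_apply, substAlgHom_comp_substAlgHom_apply, coe_substAlgHom, funext hX, subst_self,
    id, AlgHom.id_apply]

/-- The automorphism of `R⟦t, X i⟧` fixing `t` and sending `X i` to `X i + t ^ (w i + 1)`, where
`t` is the variable `none`. Shears are used to make a power series regular in `t`. -/
def shear [Finite τ] (w : τ → ℕ) : MvPowerSeries (Option τ) R ≃ₐ[R] MvPowerSeries (Option τ) R :=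
  AlgEquiv.ofAlgHom (substAlgHom (hasSubst_shearVars w 1)) (substAlgHom (hasSubst_shearVars w (-1)))
    (substAlgHom_shearVars_comp_eq_id w (neg_add_cancel 1))
    (substAlgHom_shearVars_comp_eq_id w (add_neg_cancel 1))

theorem shear_apply [Finite τ] (w : τ → ℕ) (f : MvPowerSeries (Option τ) R) :
    shear w f = subst (shearVars w 1) f :=
  substAlgHom_apply (hasSubst_shearVars w 1) f

/-- Restriction of a power series to the axis of the variable `none`: every other variable is set
to zero. -/
def axisRestriction : MvPowerSeries (Option τ) R →+* PowerSeries R :=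
  (PowerSeries.map constantCoeff).comp (optionEquivLeft τ R).toRingEquiv.toRingHom

theorem coeff_axisRestriction (f : MvPowerSeries (Option τ) R) (d : ℕ) :
    PowerSeries.coeff d (axisRestriction f) = coeff (Finsupp.single none d) f := by
  have hd : Finsupp.optionElim d (0 : τ →₀ ℕ) = Finsupp.single none d := by
    ext (_ | i) <;> simp
  rw [axisRestriction, RingHom.comp_apply, PowerSeries.coeff_map,
    ← coeff_zero_eq_constantCoeff_apply, ← hd]
  exact coeff_coeff_optionEquivLeft f d 0

theorem axisRestriction_shearVars_none (w : τ → ℕ) (a : R) :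
    axisRestriction (shearVars w a none) = PowerSeries.X := by
  simp [axisRestriction, shearVars]

theorem axisRestriction_shearVars_some (w : τ → ℕ) (a : R) (i : τ) :
    axisRestriction (shearVars w a (some i)) = PowerSeries.C a * PowerSeries.X ^ (w i + 1) := by
  simp [axisRestriction, shearVars]

theorem axisRestriction_prod_shearVars [Fintype τ] (w : τ → ℕ) (m : Option τ →₀ ℕ) :
    axisRestriction (m.prod fun s e => shearVars w (1 : R) s ^ e) =
      PowerSeries.X ^ (m none + ∑ i, (w i + 1) * m (some i)) := by
  rw [Finsupp.prod_fintype _ _ fun _ => pow_zero _, Fintype.prod_option, pow_add,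
    ← Finset.prod_pow_eq_pow_sum]
  simp only [map_mul, map_prod, map_pow, axisRestriction_shearVars_none,
    axisRestriction_shearVars_some, map_one, one_mul, ← pow_mul]

theorem coeff_axisRestriction_shear [Fintype τ] (w : τ → ℕ) (f : MvPowerSeries (Option τ) R)
    (d : ℕ) :
    PowerSeries.coeff d (axisRestriction (shear w f)) =
      ∑ᶠ m : Option τ →₀ ℕ,
        coeff m f * if m none + ∑ i, (w i + 1) * m (some i) = d then 1 else 0 := by
  rw [coeff_axisRestriction, shear_apply, coeff_subst (hasSubst_shearVars w 1)]
  refine finsum_congr fun m => ?_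
  rw [← coeff_axisRestriction, axisRestriction_prod_shearVars, PowerSeries.coeff_X_pow, smul_eq_mul]
  simp only [eq_comm]

theorem exists_axisRestriction_shear_ne_zero [Finite τ] {f : MvPowerSeries (Option τ) R}
    (hf : f ≠ 0) :
    ∃ w : τ → ℕ, axisRestriction (shear w f) ≠ 0 := by
  cases nonempty_fintype τ
  have hS : {m | coeff m f ≠ 0}.Nonempty := (ne_zero_iff_exists_coeff_ne_zero f).mp hf
  obtain ⟨w, m, hm, hmin⟩ := exists_weights_forall_le_imp_eq Finset.univ
    (fun m : Option τ →₀ ℕ => m none) (fun i m => m (some i)) hS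
  refine ⟨w, fun h => hm ?_⟩
  have hcoeff := congrArg (PowerSeries.coeff (m none + ∑ i, (w i + 1) * m (some i))) h
  rw [coeff_axisRestriction_shear, finsum_eq_single _ m, if_pos rfl, mul_one] at hcoeff
  · exact hcoeff
  intro m' hm'
  rw [mul_ite, mul_one, mul_zero, ite_eq_right_iff]
  intro hweight
  by_contra hne
  obtain ⟨hnone, hsome⟩ := hmin m' hne hweight.le
  exact hm' (Finsupp.ext fun
    | none => hnone
    | some i => hsome i (Finset.mem_univ i))

end Shear

section Weierstrass

open Polynomial PowerSeries

variable {A : Type*} [CommRing A] {I : Ideal A} [IsAdicComplete I A] {P : A[X]}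

theorem coe_dvd_coe_iff_of_isDistinguishedAt (hP : P.IsDistinguishedAt I) {Q : A[X]} :
    (P : A⟦X⟧) ∣ Q ↔ P ∣ Q := by
  rw [← Ideal.mem_span_singleton, ← Ideal.mem_span_singleton, ← Ideal.Quotient.eq_zero_iff_mem,
    ← Ideal.Quotient.eq_zero_iff_mem, ← map_eq_zero_iff _ hP.algEquivQuotient.injective]
  simp

theorem isUnit_of_isUnit_coe_of_dvd (hP : P.IsDistinguishedAt I) {Q : A[X]} (hQP : Q ∣ P)
    (hQ : IsUnit (Q : A⟦X⟧)) : IsUnit Q := by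
  obtain ⟨T, rfl⟩ := hQP
  have hT : (↑(Q * T) : A⟦X⟧) ∣ T := by
    rw [Polynomial.coe_mul]
    exact hQ.mul_left_dvd.mpr dvd_rfl
  obtain ⟨V, hV⟩ := (coe_dvd_coe_iff_of_isDistinguishedAt hP).mp hT
  refine IsUnit.of_mul_eq_one V (hP.monic.isRegular.left ?_)
  linear_combination -Q * hV

theorem irreducible_of_irreducible_coe (hP : P.IsDistinguishedAt I)
    (hirr : Irreducible (P : A⟦X⟧)) : Irreducible P where
  not_isUnit hunit := hirr.not_isUnit (hunit.map (Polynomial.coeToPowerSeries.ringHom (R := A)))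
  isUnit_or_isUnit {a b} hab := by
    have hcoe : (P : A⟦X⟧) = a * b := by rw [hab, Polynomial.coe_mul]
    exact (hirr.isUnit_or_isUnit hcoe).imp
      (isUnit_of_isUnit_coe_of_dvd hP (Dvd.intro b hab.symm))
      (isUnit_of_isUnit_coe_of_dvd hP (Dvd.intro_left a hab.symm))

theorem prime_coe_of_isDistinguishedAt (hP : P.IsDistinguishedAt I) (hprime : Prime P) :
    Prime (P : A⟦X⟧) := by
  have hspan : (Ideal.span {P}).IsPrime := (Ideal.span_singleton_prime hprime.ne_zero).mpr hprime
  rw [← Ideal.Quotient.isDomain_iff_prime] at hspan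
  rw [← Ideal.span_singleton_prime (Polynomial.coe_eq_zero_iff.not.mpr hprime.ne_zero),
    ← Ideal.Quotient.isDomain_iff_prime]
  exact hP.algEquivQuotient.symm.toMulEquiv.isDomain _

theorem prime_of_irreducible_of_map_residue_ne_zero {A : Type*} [CommRing A] [IsLocalRing A]
    [IsAdicComplete (IsLocalRing.maximalIdeal A) A] [UniqueFactorizationMonoid A]
    {f : A⟦X⟧} (hf : Irreducible f) (hres : f.map (IsLocalRing.residue A) ≠ 0) : Prime f := by
  obtain ⟨P, u, hfac⟩ := PowerSeries.exists_isWeierstrassFactorization hres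
  have hP := hfac.isDistinguishedAt
  have hPf : Associated (P : A⟦X⟧) f := ⟨hfac.isUnit.unit, hfac.eq_mul.symm⟩
  have hPirr : Irreducible P := irreducible_of_irreducible_coe hP (hPf.irreducible_iff.mpr hf)
  exact hPf.prime_iff.mp (prime_coe_of_isDistinguishedAt hP hPirr.prime)

end Weierstrass

section UniqueFactorization

open MvPowerSeries

theorem mem_span_X_of_forall_coeff_eq_zero {σ R : Type*} [CommRing R] (S : Finset σ)
    {f : MvPowerSeries σ R} (hf : ∀ m : σ →₀ ℕ, (∀ i ∈ S, m i = 0) → coeff m f = 0) :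
    f ∈ Ideal.span (Set.range (X : σ → MvPowerSeries σ R)) := by
  classical
  induction S using Finset.induction_on generalizing f with
  | empty =>
    have hf0 : f = 0 := by
      ext m
      exact hf m fun i hi => absurd hi (Finset.notMem_empty i)
    exact hf0 ▸ Ideal.zero_mem _
  | insert i S _ ih =>
    let f₀ : MvPowerSeries σ R := fun m => if m i = 0 then coeff m f else 0
    have coeff_f₀ (m : σ →₀ ℕ) : coeff m f₀ = if m i = 0 then coeff m f else 0 := rfl
    have hX : (X i : MvPowerSeries σ R) ∣ f - f₀ := by
      rw [X_dvd_iff]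
      intro m hm
      rw [map_sub, coeff_f₀, if_pos hm, sub_self]
    have hf₀ : f₀ ∈ Ideal.span (Set.range (X : σ → MvPowerSeries σ R)) := by
      refine ih fun m hm => ?_
      rw [coeff_f₀]
      split_ifs with hmi
      · exact hf m (Finset.forall_mem_insert _ _ _ |>.mpr ⟨hmi, hm⟩)
      · rfl
    rw [← sub_add_cancel f f₀]
    exact Ideal.add_mem _ (Ideal.mem_of_dvd _ hX (Ideal.subset_span ⟨i, rfl⟩)) hf₀

theorem mem_span_X_iff_constantCoeff_eq_zero {σ R : Type*} [Finite σ] [CommRing R]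
    {f : MvPowerSeries σ R} :
    f ∈ Ideal.span (Set.range (X : σ → MvPowerSeries σ R)) ↔ constantCoeff f = 0 := by
  cases nonempty_fintype σ
  constructor
  · intro hf
    rw [← RingHom.mem_ker]
    refine Ideal.span_le.mpr ?_ hf
    rintro _ ⟨i, rfl⟩
    exact constantCoeff_X i
  · intro hf
    refine mem_span_X_of_forall_coeff_eq_zero Finset.univ fun m hm => ?_
    rwa [show m = 0 from Finsupp.ext fun i => hm i (Finset.mem_univ i)]

theorem maximalIdeal_mvPowerSeries_eq_span_X (σ K : Type*) [Finite σ] [Field K] :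
    IsLocalRing.maximalIdeal (MvPowerSeries σ K) = Ideal.span (Set.range X) := by
  ext f
  rw [mem_span_X_iff_constantCoeff_eq_zero, IsLocalRing.mem_maximalIdeal, mem_nonunits_iff,
    isUnit_iff_constantCoeff, isUnit_iff_ne_zero, not_not]

variable {K : Type*} [Field K]

theorem map_residue_optionEquivLeft_ne_zero {τ : Type*} {f : MvPowerSeries (Option τ) K}
    (hf : axisRestriction f ≠ 0) :
    (optionEquivLeft τ K f).map (IsLocalRing.residue (MvPowerSeries τ K)) ≠ 0 := by
  contrapose! hf
  ext d
  have hd := congrArg (PowerSeries.coeff d) hf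
  rw [PowerSeries.coeff_map, map_zero, IsLocalRing.residue_eq_zero_iff,
    IsLocalRing.mem_maximalIdeal, mem_nonunits_iff, isUnit_iff_constantCoeff, isUnit_iff_ne_zero,
    not_not] at hd
  exact hd

theorem prime_of_irreducible_mvPowerSeries_option {τ : Type*} [Finite τ]
    [UniqueFactorizationMonoid (MvPowerSeries τ K)] {f : MvPowerSeries (Option τ) K}
    (hf : Irreducible f) : Prime f := by
  have : IsAdicComplete (IsLocalRing.maximalIdeal (MvPowerSeries τ K)) (MvPowerSeries τ K) := by
    rw [maximalIdeal_mvPowerSeries_eq_span_X]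
    infer_instance
  obtain ⟨w, hw⟩ := exists_axisRestriction_shear_ne_zero hf.ne_zero
  let e := (shear w).trans (optionEquivLeft τ K)
  rw [← MulEquiv.prime_iff e]
  exact prime_of_irreducible_of_map_residue_ne_zero ((MulEquiv.irreducible_iff e).mpr hf)
    (map_residue_optionEquivLeft_ne_zero hw)

theorem uniqueFactorizationMonoid_mvPowerSeries (σ K : Type*) [Finite σ] [Field K] :
    UniqueFactorizationMonoid (MvPowerSeries σ K) := by
  induction σ using Finite.induction_empty_option with
  | of_equiv e h =>
    exact (renameEquiv K e).toMulEquiv.uniqueFactorizationMonoid h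
  | h_empty =>
    exact (isEmptyEquiv PEmpty K).symm.toMulEquiv.uniqueFactorizationMonoid inferInstance
  | @h_option τ _ _ =>
    have : IsDomain (MvPowerSeries (Option τ) K) := NoZeroDivisors.to_isDomain _
    exact { irreducible_iff_prime :=
      ⟨prime_of_irreducible_mvPowerSeries_option, Prime.irreducible⟩ }

end UniqueFactorization

theorem stmt_3_general {A R : Type*} [CommRing A] [CommRing R] [Algebra A R] [Algebra ℚ R]
    [UniqueFactorizationMonoid R] (H : Derivation A R R) (g : R)
    (hdvd : ∀ (f s : R) (k : ℕ), 1 ≤ k → Irreducible f → ¬ f ∣ s → g = f ^ k * s →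
      f ^ (2 * k - 1) ∣ 3 * H g ^ 2 - 2 * g * H (H g)) :
    (∀ (f s : R) (k : ℕ), 1 ≤ k → Irreducible f → ¬ f ∣ s → g = f ^ k * s → f ∣ H f) ∧
      g ∣ H g := by
  have hfactor : ∀ (f s : R) (k : ℕ), 1 ≤ k → Irreducible f → ¬ f ∣ s → g = f ^ k * s →
      f ∣ H f := by
    intro f s k hk hf hs hg
    exact dvd_derivation_of_pow_dvd H (Nat.one_le_iff_ne_zero.mp hk) hf.prime hs
      (hg ▸ hdvd f s k hk hf hs hg)
  refine ⟨hfactor, ?_⟩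
  rcases eq_or_ne g 0 with rfl | hg
  · simp only [map_zero, dvd_refl]
  refine dvd_derivation_of_forall_prime_dvd H fun p hp hpg => ?_
  obtain ⟨k, s, hs, hgs⟩ := WfDvdMonoid.max_power_factor hg hp.irreducible
  have hk : k ≠ 0 := by
    rintro rfl
    exact hs (by rwa [hgs, pow_zero, one_mul] at hpg)
  exact hfactor p s k (Nat.one_le_iff_ne_zero.mpr hk) hp.irreducible hs hgs

/-- In the formal power series ring over a field of characteristic zero, let
`H` be a derivation and `g ≠ 0`. Suppose that for every decomposition
`g = f^k * σ` with `f` irreducible, `k ≥ 1` and `σ` coprime to `f`, the power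
`f^{2k−1}` divides `3 (H g)² − 2 g H(H g)`. Then every such irreducible factor
`f` divides `H f`, and consequently `g` divides `H g`. -/
theorem stmt_3 {σ : Type*} [Fintype σ] {K : Type*} [Field K] [CharZero K]
    (H : Derivation K (MvPowerSeries σ K) (MvPowerSeries σ K))
    (g : MvPowerSeries σ K) (hg0 : g ≠ 0)
    (hdvd : ∀ (f s : MvPowerSeries σ K) (k : ℕ), 1 ≤ k → Irreducible f →
      ¬ f ∣ s → g = f ^ k * s →
      f ^ (2 * k - 1) ∣ 3 * H g ^ 2 - 2 * g * H (H g)) :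
    (∀ (f s : MvPowerSeries σ K) (k : ℕ), 1 ≤ k → Irreducible f →
      ¬ f ∣ s → g = f ^ k * s → f ∣ H f) ∧ g ∣ H g := by
  have := uniqueFactorizationMonoid_mvPowerSeries σ K
  exact stmt_3_general H g hdvd
end

section
/- The contravariant metric tensor g^{ij} = −((1, 2u, 2u), (2u, 4v, 4v), (2u, 4v, 4w)) on ℝ³ (coordinates u, v, w) has determinant g = 16(w−v)(u²−v), and is positive definite exactly on the region R = {(u,v,w) : u² < v < w} after the overall sign; moreover the Riemannian curvature tensor of the associated metric vanishes identically on R. -/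
open Matrix

/-- `i`-th partial derivative of a function on ℝ³. -/
noncomputable def pd (i : Fin 3) (f : (Fin 3 → ℝ) → ℝ) (p : Fin 3 → ℝ) : ℝ :=
  fderiv ℝ f p (Pi.single i 1)

/-- The contravariant metric tensor (without the overall minus sign) in the
coordinates `(u, v, w) = (p 0, p 1, p 2)`. -/
noncomputable def gup (p : Fin 3 → ℝ) : Matrix (Fin 3) (Fin 3) ℝ :=
  !![1, 2 * p 0, 2 * p 0;
     2 * p 0, 4 * p 1, 4 * p 1;
     2 * p 0, 4 * p 1, 4 * p 2]

/-- The covariant metric: the inverse of the contravariant tensor. -/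
noncomputable def gdown (p : Fin 3 → ℝ) : Matrix (Fin 3) (Fin 3) ℝ := (gup p)⁻¹

/-- Christoffel symbols `Γ^i_{jk}` of the metric `gdown`. -/
noncomputable def Chr (i j k : Fin 3) (p : Fin 3 → ℝ) : ℝ :=
  (1 / 2) * ∑ l, gup p i l *
    (pd j (fun q => gdown q l k) p + pd k (fun q => gdown q l j) p
      - pd l (fun q => gdown q j k) p)

/-- Riemannian curvature tensor `R^i_{jkl}` of the metric `gdown`. -/
noncomputable def Riem (i j k l : Fin 3) (p : Fin 3 → ℝ) : ℝ :=
  pd k (fun q => Chr i l j q) p - pd l (fun q => Chr i k j q) p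
    + ∑ m, (Chr i k m p * Chr m l j p - Chr i l m p * Chr m k j p)

/-!
If the differentials of a coordinate system `φ` with Jacobian matrix `J` have constant inner
products `J h Jᵀ = c`, then `h⁻¹ = Jᵀ c⁻¹ J`, and the symmetry of second derivatives turns the
Christoffel formula into `J Γⱼ = ∂ⱼ J`. Hence `J (∂ₖ Γₗ + Γₖ Γₗ) = ∂ₖ ∂ₗ J` is symmetric in `k` and
`l`, so the curvature vanishes. Here, up to constant factors on `y` and `z`, the coordinates with
`u = x`, `v = x² ± y²` and `w = v ± z²` have this property. The pivots `1`, `4 (v - u²)`,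
`4 (w - v)` of `gup` give its determinant and the region where it is positive definite.
-/

open Filter Topology

lemma differentiableAt_mul_apply {E m n o : Type*} [NormedAddCommGroup E] [NormedSpace ℝ E]
    [Fintype n] {p : E} {M : E → Matrix m n ℝ} {N : E → Matrix n o ℝ}
    (hM : ∀ a b, DifferentiableAt ℝ (fun q => M q a b) p)
    (hN : ∀ a b, DifferentiableAt ℝ (fun q => N q a b) p) (a : m) (b : o) :
    DifferentiableAt ℝ (fun q => (M q * N q) a b) p := by
  simp only [mul_apply]
  fun_prop

section PartialDeriv

variable {ι m n o : Type*} [DecidableEq ι] {p : ι → ℝ}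

/-- The partial derivative `∂f/∂xᵢ` on `ℝ^ι`; on `ℝ³` it unfolds to `pd`. -/
noncomputable def partialDeriv (i : ι) (f : (ι → ℝ) → ℝ) (p : ι → ℝ) : ℝ :=
  fderiv ℝ f p (Pi.single i 1)

lemma contDiffAt_partialDeriv [Fintype ι] {r s : WithTop ℕ∞} {f : (ι → ℝ) → ℝ}
    (hf : ContDiffAt ℝ s f p) (hrs : r + 1 ≤ s) (i : ι) : ContDiffAt ℝ r (partialDeriv i f) p :=
  (hf.fderiv_right hrs).clm_apply contDiffAt_const

lemma partialDeriv_comm [Fintype ι] {f : (ι → ℝ) → ℝ} (hf : ContDiffAt ℝ 2 f p) (i j : ι) :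
    partialDeriv i (partialDeriv j f) p = partialDeriv j (partialDeriv i f) p := by
  have hf' : DifferentiableAt ℝ (fderiv ℝ f) p :=
    (hf.fderiv_right (m := 1) (by norm_num)).differentiableAt (by norm_num)
  have second_partial (i j : ι) : partialDeriv i (partialDeriv j f) p =
      fderiv ℝ (fderiv ℝ f) p (Pi.single i 1) (Pi.single j 1) := by
    unfold partialDeriv
    simp [fderiv_clm_apply hf' (differentiableAt_const _)]
  rw [second_partial, second_partial, (hf.isSymmSndFDerivAt (by simp)).eq]

lemma partialDeriv_sqrt [Finite ι] {f : (ι → ℝ) → ℝ} (hf : DifferentiableAt ℝ f p)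
    (hfp : f p ≠ 0) (i : ι) :
    partialDeriv i (fun q => √(f q)) p = partialDeriv i f p / (2 * √(f p)) := by
  cases nonempty_fintype ι
  simp only [partialDeriv, fderiv_sqrt hf hfp, _root_.smul_apply, smul_eq_mul]
  ring

/-- The entrywise partial derivative of a matrix-valued function. -/
noncomputable def matrixPartialDeriv (i : ι) (M : (ι → ℝ) → Matrix m n ℝ) (p : ι → ℝ) :
    Matrix m n ℝ :=
  of fun a b => partialDeriv i (fun q => M q a b) p

lemma matrixPartialDeriv_congr {M N : (ι → ℝ) → Matrix m n ℝ} (h : M =ᶠ[𝓝 p] N) (i : ι) :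
    matrixPartialDeriv i M p = matrixPartialDeriv i N p := by
  ext a b
  have hab : (fun q => M q a b) =ᶠ[𝓝 p] fun q => N q a b := h.mono fun q hq => by simp only [hq]
  simp only [matrixPartialDeriv, partialDeriv, of_apply, hab.fderiv_eq]

lemma matrixPartialDeriv_mul [Finite ι] [Fintype n] {M : (ι → ℝ) → Matrix m n ℝ}
    {N : (ι → ℝ) → Matrix n o ℝ} (hM : ∀ a b, DifferentiableAt ℝ (fun q => M q a b) p)
    (hN : ∀ a b, DifferentiableAt ℝ (fun q => N q a b) p) (i : ι) :
    matrixPartialDeriv i (fun q => M q * N q) p =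
      matrixPartialDeriv i M p * N p + M p * matrixPartialDeriv i N p := by
  cases nonempty_fintype ι
  ext a b
  have hMN (c : n) : DifferentiableAt ℝ (fun q => M q a c * N q c b) p := (hM a c).mul (hN c b)
  simp only [matrixPartialDeriv, partialDeriv, mul_apply, of_apply, Matrix.add_apply,
    ← Finset.sum_add_distrib]
  rw [fderiv_fun_sum fun c _ => hMN c, _root_.sum_apply]
  refine Finset.sum_congr rfl fun c _ => ?_
  rw [fderiv_fun_mul (hM a c) (hN c b)]
  simp only [_root_.add_apply, _root_.smul_apply, smul_eq_mul]
  ring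

lemma matrixPartialDeriv_const_mul [Finite ι] [Fintype n] (C : Matrix m n ℝ)
    {N : (ι → ℝ) → Matrix n o ℝ} (hN : ∀ a b, DifferentiableAt ℝ (fun q => N q a b) p) (i : ι) :
    matrixPartialDeriv i (fun q => C * N q) p = C * matrixPartialDeriv i N p := by
  have hC : matrixPartialDeriv i (fun _ => C) p = 0 := by
    ext a b
    simp [matrixPartialDeriv, partialDeriv]
  rw [matrixPartialDeriv_mul (fun a b => differentiableAt_const (C a b)) hN, hC, Matrix.zero_mul,
    zero_add]

end PartialDeriv

section Curvature

variable {ι : Type*} [Fintype ι] [DecidableEq ι]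

/-- The Christoffel symbols `Γ^i_{jk}` of the metric `h⁻¹`, for a contravariant metric `h`. -/
noncomputable def christoffel (h : (ι → ℝ) → Matrix ι ι ℝ) (i j k : ι) (p : ι → ℝ) : ℝ :=
  (1 / 2) * ∑ l, h p i l *
    (partialDeriv j (fun q => (h q)⁻¹ l k) p + partialDeriv k (fun q => (h q)⁻¹ l j) p
      - partialDeriv l (fun q => (h q)⁻¹ j k) p)

/-- The connection matrix `Γ_j` of the metric `h⁻¹`, with entries `(Γ_j)ᵢₖ = Γ^i_{jk}`. -/
noncomputable def connectionMatrix (h : (ι → ℝ) → Matrix ι ι ℝ) (j : ι) (p : ι → ℝ) :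
    Matrix ι ι ℝ :=
  of fun i k => christoffel h i j k p

/-- The Riemann curvature tensor of the metric `h⁻¹`: the component `R^i_{jkl}` is the entry
`(i, j)` of `curvatureMatrix h k l`. -/
noncomputable def curvatureMatrix (h : (ι → ℝ) → Matrix ι ι ℝ) (k l : ι) (p : ι → ℝ) :
    Matrix ι ι ℝ :=
  matrixPartialDeriv k (connectionMatrix h l) p - matrixPartialDeriv l (connectionMatrix h k) p
    + (connectionMatrix h k p * connectionMatrix h l p
      - connectionMatrix h l p * connectionMatrix h k p)

/-- The Jacobian matrix `∂φₐ/∂xᵢ` of a tuple of functions, with `a` the row index. -/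
noncomputable def jacobianMatrix (φ : ι → (ι → ℝ) → ℝ) (p : ι → ℝ) : Matrix ι ι ℝ :=
  of fun a i => partialDeriv i (φ a) p

/-- `φ` is a system of flat coordinates near `p` for the contravariant metric `h`: the inner
products of the differentials `dφₐ` are constants, namely the entries of the matrix `c`. -/
structure IsFlatChartAt (h : (ι → ℝ) → Matrix ι ι ℝ) (φ : ι → (ι → ℝ) → ℝ) (c : Matrix ι ι ℝ)
    (p : ι → ℝ) : Prop where
  contDiffAt : ∀ a, ContDiffAt ℝ 3 (φ a) p
  isSymm : c.IsSymm
  isUnit : IsUnit c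
  pushforward_eq : ∀ᶠ q in 𝓝 p, jacobianMatrix φ q * h q * (jacobianMatrix φ q)ᵀ = c

lemma isUnit_of_mul_mul_transpose_eq {J h c : Matrix ι ι ℝ} (hc : IsUnit c) (H : J * h * Jᵀ = c) :
    IsUnit J := by
  rw [← H, Matrix.mul_assoc] at hc
  exact isUnit_of_mul_isUnit_left hc

lemma inv_eq_transpose_mul_inv_mul {J h c : Matrix ι ι ℝ} (hc : IsUnit c) (H : J * h * Jᵀ = c) :
    h⁻¹ = Jᵀ * (c⁻¹ * J) := by
  have right_inv : J * (h * Jᵀ * c⁻¹) = 1 := by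
    rw [← Matrix.mul_assoc, ← Matrix.mul_assoc, H,
      mul_nonsing_inv _ ((isUnit_iff_isUnit_det c).1 hc)]
  refine inv_eq_right_inv ?_
  simpa only [Matrix.mul_assoc] using mul_eq_one_comm.1 right_inv

variable {h : (ι → ℝ) → Matrix ι ι ℝ} {φ : ι → (ι → ℝ) → ℝ} {c : Matrix ι ι ℝ} {p : ι → ℝ}

lemma matrixPartialDeriv_jacobianMatrix_swap {a : ι} (hφ : ContDiffAt ℝ 2 (φ a) p) (i j : ι) :
    matrixPartialDeriv i (jacobianMatrix φ) p a j = matrixPartialDeriv j (jacobianMatrix φ) p a i :=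
  partialDeriv_comm hφ i j

lemma matrixPartialDeriv_matrixPartialDeriv_jacobianMatrix_comm
    (hφ : ∀ a, ContDiffAt ℝ 3 (φ a) p) (k l : ι) :
    matrixPartialDeriv k (matrixPartialDeriv l (jacobianMatrix φ)) p =
      matrixPartialDeriv l (matrixPartialDeriv k (jacobianMatrix φ)) p := by
  ext a i
  exact partialDeriv_comm (contDiffAt_partialDeriv (hφ a) (by norm_num) i) k l

namespace IsFlatChartAt

lemma eventually (H : IsFlatChartAt h φ c p) : ∀ᶠ q in 𝓝 p, IsFlatChartAt h φ c q := by
  filter_upwards [eventually_all.2 fun a => (H.contDiffAt a).eventually (by simp),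
    H.pushforward_eq.eventually_nhds] with q hφ hq
  exact ⟨hφ, H.isSymm, H.isUnit, hq⟩

lemma differentiableAt_jacobianMatrix (H : IsFlatChartAt h φ c p) (a i : ι) :
    DifferentiableAt ℝ (fun q => jacobianMatrix φ q a i) p :=
  (contDiffAt_partialDeriv (r := 2) (H.contDiffAt a) (by norm_num) i).differentiableAt (by norm_num)

lemma differentiableAt_matrixPartialDeriv_jacobianMatrix (H : IsFlatChartAt h φ c p) (j a i : ι) :
    DifferentiableAt ℝ (fun q => matrixPartialDeriv j (jacobianMatrix φ) q a i) p :=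
  (contDiffAt_partialDeriv (r := 1)
    (contDiffAt_partialDeriv (r := 2) (H.contDiffAt a) (by norm_num) i)
    (by norm_num) j).differentiableAt (by norm_num)

lemma matrixPartialDeriv_inv (H : IsFlatChartAt h φ c p) (j : ι) :
    matrixPartialDeriv j (fun q => (h q)⁻¹) p =
      (matrixPartialDeriv j (jacobianMatrix φ) p)ᵀ * (c⁻¹ * jacobianMatrix φ p) +
        (jacobianMatrix φ p)ᵀ * (c⁻¹ * matrixPartialDeriv j (jacobianMatrix φ) p) := by
  have hJ := H.differentiableAt_jacobianMatrix
  rw [matrixPartialDeriv_congr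
    (H.pushforward_eq.mono fun q hq => inv_eq_transpose_mul_inv_mul H.isUnit hq),
    matrixPartialDeriv_mul (M := fun q => (jacobianMatrix φ q)ᵀ) (fun a b => hJ b a)
      (differentiableAt_mul_apply (fun a b => differentiableAt_const (c⁻¹ a b)) hJ),
    matrixPartialDeriv_const_mul _ hJ]
  rfl

/-- The Koszul combination of the derivatives of the metric is twice `⟨dφ, ∂ⱼ dφ⟩`: the symmetry of
second derivatives cancels the other terms in pairs. -/
lemma koszul (H : IsFlatChartAt h φ c p) (j k l : ι) :
    partialDeriv j (fun q => (h q)⁻¹ l k) p + partialDeriv k (fun q => (h q)⁻¹ l j) p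
        - partialDeriv l (fun q => (h q)⁻¹ j k) p =
      2 * ((jacobianMatrix φ p)ᵀ * (c⁻¹ * matrixPartialDeriv j (jacobianMatrix φ) p)) l k := by
  set J := jacobianMatrix φ
  let S (j : ι) : Matrix ι ι ℝ := (J p)ᵀ * (c⁻¹ * matrixPartialDeriv j J p)
  have S_swap (j l k : ι) : S j l k = S k l j := by
    simp only [S, mul_apply (M := (J p)ᵀ), mul_apply (M := c⁻¹)]
    simp only [J, matrixPartialDeriv_jacobianMatrix_swap ((H.contDiffAt _).of_le (by norm_num)) j k]
  have S_transpose (j : ι) : (S j)ᵀ = (matrixPartialDeriv j J p)ᵀ * (c⁻¹ * J p) := by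
    simp only [S, transpose_mul, transpose_transpose, transpose_nonsing_inv, H.isSymm.eq,
      Matrix.mul_assoc]
  have deriv_inv (j l k : ι) : partialDeriv j (fun q => (h q)⁻¹ l k) p = S j k l + S j l k := by
    have := congrFun₂ (H.matrixPartialDeriv_inv j) l k
    rwa [← S_transpose] at this
  rw [deriv_inv, deriv_inv, deriv_inv, S_swap j k l, S_swap k l j, S_swap k j l]
  ring

lemma connectionMatrix_eq (H : IsFlatChartAt h φ c p) (j : ι) :
    connectionMatrix h j p =
      h p * ((jacobianMatrix φ p)ᵀ * (c⁻¹ * matrixPartialDeriv j (jacobianMatrix φ) p)) := by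
  ext i k
  simp only [connectionMatrix, of_apply, christoffel, H.koszul, mul_apply (M := h p),
    Finset.mul_sum]
  exact Finset.sum_congr rfl fun l _ => by ring

lemma jacobianMatrix_mul_connectionMatrix (H : IsFlatChartAt h φ c p) (j : ι) :
    jacobianMatrix φ p * connectionMatrix h j p = matrixPartialDeriv j (jacobianMatrix φ) p := by
  rw [H.connectionMatrix_eq, ← Matrix.mul_assoc, ← Matrix.mul_assoc, H.pushforward_eq.self_of_nhds,
    mul_nonsing_inv_cancel_left _ _ ((isUnit_iff_isUnit_det c).1 H.isUnit)]

lemma differentiableAt_connectionMatrix (H : IsFlatChartAt h φ c p)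
    (hh : ∀ i j, DifferentiableAt ℝ (fun q => h q i j) p) (j i k : ι) :
    DifferentiableAt ℝ (fun q => connectionMatrix h j q i k) p := by
  have hΓ := differentiableAt_mul_apply hh <|
    differentiableAt_mul_apply (fun a b => H.differentiableAt_jacobianMatrix b a) <|
      differentiableAt_mul_apply (fun a b => differentiableAt_const (c⁻¹ a b))
        (H.differentiableAt_matrixPartialDeriv_jacobianMatrix j)
  exact (hΓ i k).congr_of_eventuallyEq <|
    H.eventually.mono fun q hq => congrFun₂ (hq.connectionMatrix_eq j) i k

lemma jacobianMatrix_mul_covariantDeriv (H : IsFlatChartAt h φ c p)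
    (hh : ∀ i j, DifferentiableAt ℝ (fun q => h q i j) p) (k l : ι) :
    jacobianMatrix φ p * (matrixPartialDeriv k (connectionMatrix h l) p
        + connectionMatrix h k p * connectionMatrix h l p) =
      matrixPartialDeriv k (matrixPartialDeriv l (jacobianMatrix φ)) p := by
  rw [← matrixPartialDeriv_congr
      (H.eventually.mono fun q hq => hq.jacobianMatrix_mul_connectionMatrix l),
    matrixPartialDeriv_mul H.differentiableAt_jacobianMatrix
      (H.differentiableAt_connectionMatrix hh l),
    Matrix.mul_add, ← Matrix.mul_assoc, H.jacobianMatrix_mul_connectionMatrix, add_comm]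

theorem curvatureMatrix_eq_zero (H : IsFlatChartAt h φ c p)
    (hh : ∀ i j, DifferentiableAt ℝ (fun q => h q i j) p) (k l : ι) :
    curvatureMatrix h k l p = 0 := by
  have hJ : IsUnit (jacobianMatrix φ p) :=
    isUnit_of_mul_mul_transpose_eq H.isUnit H.pushforward_eq.self_of_nhds
  have comm := matrixPartialDeriv_matrixPartialDeriv_jacobianMatrix_comm H.contDiffAt k l
  rw [← H.jacobianMatrix_mul_covariantDeriv hh, ← H.jacobianMatrix_mul_covariantDeriv hh] at comm
  rw [curvatureMatrix, sub_add_sub_comm, sub_eq_zero]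
  exact hJ.mul_left_cancel comm

end IsFlatChartAt

end Curvature

section FlatCoordinates

/-- The unipotent factor of the decomposition `gup = L D Lᵀ`. -/
noncomputable def gupLower (p : Fin 3 → ℝ) : Matrix (Fin 3) (Fin 3) ℝ :=
  !![1, 0, 0;
     2 * p 0, 1, 0;
     2 * p 0, 1, 1]

/-- The diagonal factor of the decomposition `gup = L D Lᵀ`. -/
noncomputable def gupPivots (p : Fin 3 → ℝ) : Fin 3 → ℝ :=
  ![1, 4 * (p 1 - p 0 ^ 2), 4 * (p 2 - p 1)]

lemma gup_eq_gupLower_mul_diagonal_mul_transpose (p : Fin 3 → ℝ) :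
    gup p = gupLower p * diagonal (gupPivots p) * (gupLower p)ᵀ := by
  ext i j
  rw [mul_apply]
  simp only [mul_diagonal, transpose_apply, Fin.sum_univ_three]
  fin_cases i <;> fin_cases j <;> simp [gup, gupLower, gupPivots] <;> ring

lemma det_gupLower (p : Fin 3 → ℝ) : (gupLower p).det = 1 := by
  simp [gupLower, det_fin_three]

lemma det_neg_gup (p : Fin 3 → ℝ) :
    (-(gup p)).det = 16 * (p 2 - p 1) * ((p 0) ^ 2 - p 1) := by
  rw [det_neg, gup_eq_gupLower_mul_diagonal_mul_transpose, det_mul, det_mul, det_transpose,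
    det_gupLower, det_diagonal]
  simp only [Fintype.card_fin, gupPivots, Fin.prod_univ_three, cons_val]
  ring

lemma posDef_gup_iff (p : Fin 3 → ℝ) : (gup p).PosDef ↔ (p 0) ^ 2 < p 1 ∧ p 1 < p 2 := by
  have hL : IsUnit (gupLower p) := by simp [isUnit_iff_isUnit_det, det_gupLower]
  rw [gup_eq_gupLower_mul_diagonal_mul_transpose, ← conjTranspose_eq_transpose_of_trivial,
    ← star_eq_conjTranspose, hL.posDef_star_right_conjugate_iff, posDef_diagonal_iff]
  simp [gupPivots, Fin.forall_fin_succ]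

lemma differentiable_gup_apply (i j : Fin 3) : Differentiable ℝ fun p => gup p i j := by
  fin_cases i <;> fin_cases j <;>
    simp only [gup, Fin.zero_eta, Fin.mk_one, Fin.reduceFinMk, of_apply, cons_val', cons_val,
      cons_val_zero, cons_val_one, cons_val_fin_one] <;> fun_prop

/-- The Cartesian coordinates `(x, y, z)`, with `u = x`, `ε (v - u²) = y²` and
`δ (w - v) = z²`. The factors `ε` and `δ` let either sign of `v - u²` and of `w - v` occur. -/
noncomputable def cartesian (ε δ : ℝ) : Fin 3 → (Fin 3 → ℝ) → ℝ :=
  ![fun p => p 0, fun p => √(ε * (p 1 - p 0 ^ 2)), fun p => √(δ * (p 2 - p 1))]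

variable {ε δ : ℝ} {p : Fin 3 → ℝ}

lemma contDiffAt_cartesian {n : WithTop ℕ∞} (hy : ε * (p 1 - p 0 ^ 2) ≠ 0)
    (hz : δ * (p 2 - p 1) ≠ 0) (a : Fin 3) : ContDiffAt ℝ n (cartesian ε δ a) p := by
  fin_cases a
  · exact contDiffAt_apply ..
  · exact ContDiffAt.sqrt (by fun_prop) hy
  · exact ContDiffAt.sqrt (by fun_prop) hz

lemma jacobianMatrix_cartesian (hy : ε * (p 1 - p 0 ^ 2) ≠ 0) (hz : δ * (p 2 - p 1) ≠ 0) :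
    jacobianMatrix (cartesian ε δ) p =
      !![1, 0, 0;
         -(ε * p 0) / √(ε * (p 1 - p 0 ^ 2)), ε / (2 * √(ε * (p 1 - p 0 ^ 2))), 0;
         0, -δ / (2 * √(δ * (p 2 - p 1))), δ / (2 * √(δ * (p 2 - p 1)))] := by
  have hcoord (i : Fin 3) : HasFDerivAt (fun q : Fin 3 → ℝ => q i)
      (ContinuousLinearMap.proj (R := ℝ) i) p := hasFDerivAt_apply i p
  have dy := ((hcoord 1).fun_sub ((hcoord 0).pow 2)).const_mul ε
  have dz := ((hcoord 2).fun_sub (hcoord 1)).const_mul δ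
  have row_y (i : Fin 3) := partialDeriv_sqrt dy.differentiableAt hy i
  have row_z (i : Fin 3) := partialDeriv_sqrt dz.differentiableAt hz i
  simp only [partialDeriv, dy.fderiv, dz.fderiv] at row_y row_z
  ext a i
  fin_cases a
  · fin_cases i <;> simp [jacobianMatrix, partialDeriv, cartesian, (hcoord 0).fderiv]
  · refine (row_y i).trans ?_
    fin_cases i
    · simp
      field_simp
    · simp
    · simp
  · refine (row_z i).trans ?_
    fin_cases i <;> simp

lemma jacobianMatrix_cartesian_mul_gupLower (hy : ε * (p 1 - p 0 ^ 2) ≠ 0)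
    (hz : δ * (p 2 - p 1) ≠ 0) :
    jacobianMatrix (cartesian ε δ) p * gupLower p =
      diagonal ![1, ε / (2 * √(ε * (p 1 - p 0 ^ 2))), δ / (2 * √(δ * (p 2 - p 1)))] := by
  rw [jacobianMatrix_cartesian hy hz]
  ext a i
  fin_cases a <;> fin_cases i <;>
    simp [gupLower, mul_apply, Fin.sum_univ_three, diagonal] <;> ring

lemma jacobianMatrix_cartesian_mul_gup_mul_transpose (hy : 0 < ε * (p 1 - p 0 ^ 2))
    (hz : 0 < δ * (p 2 - p 1)) :
    jacobianMatrix (cartesian ε δ) p * gup p * (jacobianMatrix (cartesian ε δ) p)ᵀ =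
      diagonal ![1, ε, δ] := by
  have scale {κ t : ℝ} (ht : 0 < κ * t) :
      κ / (2 * √(κ * t)) * (4 * t) * (κ / (2 * √(κ * t))) = κ := by
    have : √(κ * t) ≠ 0 := (Real.sqrt_pos.2 ht).ne'
    field_simp
    rw [Real.sq_sqrt ht.le]
    ring
  have conj := jacobianMatrix_cartesian_mul_gupLower hy.ne' hz.ne'
  calc _ = (jacobianMatrix (cartesian ε δ) p * gupLower p) * diagonal (gupPivots p) *
        (jacobianMatrix (cartesian ε δ) p * gupLower p)ᵀ := by
        simp only [gup_eq_gupLower_mul_diagonal_mul_transpose, transpose_mul, Matrix.mul_assoc]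
    _ = diagonal ![1, ε, δ] := by
        rw [conj, diagonal_transpose, diagonal_mul_diagonal, diagonal_mul_diagonal]
        congr 1
        ext i
        fin_cases i
        · simp [gupPivots]
        · exact scale hy
        · exact scale hz

lemma isFlatChartAt_cartesian (hy : 0 < ε * (p 1 - p 0 ^ 2)) (hz : 0 < δ * (p 2 - p 1)) :
    IsFlatChartAt gup (cartesian ε δ) (diagonal ![1, ε, δ]) p where
  contDiffAt := contDiffAt_cartesian hy.ne' hz.ne'
  isSymm := isSymm_diagonal _
  isUnit := by
    have hε : ε ≠ 0 := left_ne_zero_of_mul hy.ne'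
    have hδ : δ ≠ 0 := left_ne_zero_of_mul hz.ne'
    simp [isUnit_iff_isUnit_det, Fin.prod_univ_three, hε, hδ]
  pushforward_eq := by
    have hy' : ∀ᶠ q : Fin 3 → ℝ in 𝓝 p, 0 < ε * (q 1 - q 0 ^ 2) :=
      ContinuousAt.eventually_lt (by fun_prop) (by fun_prop) hy
    have hz' : ∀ᶠ q : Fin 3 → ℝ in 𝓝 p, 0 < δ * (q 2 - q 1) :=
      ContinuousAt.eventually_lt (by fun_prop) (by fun_prop) hz
    filter_upwards [hy', hz'] with q using jacobianMatrix_cartesian_mul_gup_mul_transpose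

lemma Riem_eq_curvatureMatrix (i j k l : Fin 3) (p : Fin 3 → ℝ) :
    Riem i j k l p = curvatureMatrix gup k l p i j := by
  simp only [curvatureMatrix, Matrix.add_apply, Matrix.sub_apply, mul_apply,
    ← Finset.sum_sub_distrib]
  rfl

lemma Riem_eq_zero (h₀₁ : p 0 ^ 2 ≠ p 1) (h₁₂ : p 1 ≠ p 2) (i j k l : Fin 3) :
    Riem i j k l p = 0 := by
  have flat : IsFlatChartAt gup (cartesian (p 1 - p 0 ^ 2) (p 2 - p 1)) _ p :=
    isFlatChartAt_cartesian (mul_self_pos.2 (sub_ne_zero.2 h₀₁.symm))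
      (mul_self_pos.2 (sub_ne_zero.2 h₁₂.symm))
  rw [Riem_eq_curvatureMatrix,
    flat.curvatureMatrix_eq_zero fun i j => (differentiable_gup_apply i j).differentiableAt]
  rfl

end FlatCoordinates

theorem stmt_8_general :
    (∀ p : Fin 3 → ℝ, (-(gup p)).det = 16 * (p 2 - p 1) * ((p 0) ^ 2 - p 1))
    ∧ (∀ p : Fin 3 → ℝ, (gup p).PosDef ↔ ((p 0) ^ 2 < p 1 ∧ p 1 < p 2))
    ∧ (∀ p : Fin 3 → ℝ, (p 0) ^ 2 ≠ p 1 → p 1 ≠ p 2 →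
        ∀ i j k l : Fin 3, Riem i j k l p = 0) :=
  ⟨det_neg_gup, posDef_gup_iff, fun _ => Riem_eq_zero⟩

/-- The contravariant tensor `g^{ij} = −((1,2u,2u),(2u,4v,4v),(2u,4v,4w))` has
determinant `16(w−v)(u²−v)`; the matrix (after the overall sign) is positive
definite exactly on `R = {u² < v < w}`; and the Riemannian curvature tensor of
the associated metric vanishes identically on `R`. -/
theorem stmt_8 :
    (∀ p : Fin 3 → ℝ, (-(gup p)).det = 16 * (p 2 - p 1) * ((p 0) ^ 2 - p 1))
    ∧ (∀ p : Fin 3 → ℝ, (gup p).PosDef ↔ ((p 0) ^ 2 < p 1 ∧ p 1 < p 2))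
    ∧ (∀ p : Fin 3 → ℝ, (p 0) ^ 2 < p 1 → p 1 < p 2 →
        ∀ i j k l : Fin 3, Riem i j k l p = 0) :=
  ⟨stmt_8_general.1, stmt_8_general.2.1, fun p h₀₁ h₁₂ => stmt_8_general.2.2 p h₀₁.ne h₁₂.ne⟩
end

section
/- Let M be a complete connected smooth surface in ℝ³ on which one principal curvature is identically zero and the other is a nonzero constant 1/R. Then M is a round cylinder of radius R (the set of points at distance R from a fixed straight line). -/
open scoped RealInnerProductSpace
open scoped Topology

/-!
On tangent vectors the operator `A = 1 - R • dν` is the orthogonal projection onto the kernel of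
`dν`. The Codazzi equation makes `(u, w) ↦ (dA u) w` symmetric; each `dA u` is self-adjoint and, `A`
being idempotent along the surface, it exchanges the range and the kernel of `A`. Together these
force `dA = 0`, so `A` is constant along the connected surface. Hence so is
`(1 - A) (p - R • ν p)`, whose derivative `(1 - A) ∘ A` vanishes, and this places the surface on the
cylinder of radius `R` whose axis passes through `p - R • ν p` in the direction of the range of `A`.
The surface is closed. It is open in the cylinder because `f` changes sign along each radial line
through a point of the surface, while nearby points of that line off the cylinder cannot lie on the
surface. Being nonempty, it is the whole connected cylinder.
-/

section LevelSets

variable {E F G : Type*} [NormedAddCommGroup E] [NormedSpace ℝ E] [CompleteSpace E]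
  [NormedAddCommGroup F] [NormedSpace ℝ F] [FiniteDimensional ℝ F]
  [NormedAddCommGroup G] [NormedSpace ℝ G] {f : E → F} {g : E → G} {a : E}

lemma exists_parametrization_levelSet (hf : ContDiffAt ℝ 1 f a)
    (hsurj : (fderiv ℝ f a).range = ⊤) :
    ∃ φ : (fderiv ℝ f a).ker → E, φ 0 = a ∧ ContDiffAt ℝ 1 φ 0 ∧
      fderiv ℝ φ 0 = (fderiv ℝ f a).ker.subtypeL ∧
      (𝓝 0).map φ = 𝓝[f ⁻¹' {f a}] a := by
  have : CompleteSpace F := FiniteDimensional.complete ℝ F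
  have hstrict : HasStrictFDerivAt f (fderiv ℝ f a) a := hf.hasStrictFDerivAt one_ne_zero
  let Φ := hstrict.implicitFunctionDataOfComplemented f (fderiv ℝ f a) hsurj
    (ContinuousLinearMap.ker_closedComplemented_of_finiteDimensional_range _)
  have hright : Φ.rightFun a = 0 := by simp [Φ]
  have hcd : ContDiffAt ℝ 1 Φ.implicitFunction.uncurry (f a, Φ.rightFun a) :=
    Φ.contDiffAt_implicitFunction hf
      ((ContinuousLinearMap.contDiff _).contDiffAt.comp a (contDiffAt_id.sub contDiffAt_const))
      one_ne_zero
  refine ⟨Φ.implicitFunction (f a), hstrict.implicitFunction_apply_image hsurj, ?_,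
    (hstrict.to_implicitFunction hsurj).hasFDerivAt.fderiv, ?_⟩
  · rw [hright] at hcd
    exact hcd.comp 0 (contDiffAt_const.prodMk contDiffAt_id)
  · have hmap := Φ.map_implicitFunction_nhdsWithin_preimage Set.univ
    rw [Set.preimage_univ, nhdsWithin_univ, Set.univ_inter] at hmap
    exact hright ▸ hmap

lemma fderiv_apply_eq_zero_of_const_on_levelSet {c : G} (hf : ContDiffAt ℝ 1 f a)
    (hsurj : (fderiv ℝ f a).range = ⊤) (hg : DifferentiableAt ℝ g a)
    (hconst : ∀ x, f x = f a → g x = c) {v : E} (hv : fderiv ℝ f a v = 0) :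
    fderiv ℝ g a v = 0 := by
  obtain ⟨φ, hφ0, hφ, hφ', hmap⟩ := exists_parametrization_levelSet hf hsurj
  have hlevel : ∀ᶠ y in 𝓝 (0 : (fderiv ℝ f a).ker), f (φ y) = f a :=
    Filter.eventually_map.1 (hmap ▸ self_mem_nhdsWithin)
  have hgφ : g ∘ φ =ᶠ[𝓝 0] fun _ ↦ c := hlevel.mono fun y ↦ hconst (φ y)
  have hcomp : fderiv ℝ (g ∘ φ) 0 = 0 := by rw [hgφ.fderiv_eq, fderiv_const_apply]
  rw [fderiv_comp 0 (hφ0.symm ▸ hg) (hφ.differentiableAt one_ne_zero), hφ', hφ0] at hcomp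
  exact DFunLike.congr_fun hcomp ⟨v, hv⟩

lemma eventually_eq_on_levelSet_of_fderiv_eq_zero (hf : ContDiff ℝ 1 f)
    (hsurj : (fderiv ℝ f a).range = ⊤) (hg : ∀ x, f x = f a → DifferentiableAt ℝ g x)
    (hg' : ∀ x, f x = f a → ∀ v, fderiv ℝ f x v = 0 → fderiv ℝ g x v = 0) :
    ∀ᶠ x in 𝓝[f ⁻¹' {f a}] a, g x = g a := by
  obtain ⟨φ, hφ0, hφ, -, hmap⟩ := exists_parametrization_levelSet hf.contDiffAt hsurj
  have hlevel : ∀ᶠ y in 𝓝 (0 : (fderiv ℝ f a).ker), f (φ y) = f a :=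
    Filter.eventually_map.1 (hmap ▸ self_mem_nhdsWithin)
  have hlocal : ∀ᶠ y in 𝓝 (0 : (fderiv ℝ f a).ker),
      f ∘ φ =ᶠ[𝓝 y] (fun _ ↦ f a) ∧ DifferentiableAt ℝ φ y :=
    hlevel.eventually_nhds.and <|
      (hφ.eventually (by simp)).mono fun _ h ↦ h.differentiableAt one_ne_zero
  obtain ⟨ε, hε, hball⟩ := Metric.eventually_nhds_iff_ball.1 hlocal
  have hderiv : ∀ y ∈ Metric.ball (0 : (fderiv ℝ f a).ker) ε,
      HasFDerivAt (g ∘ φ) (0 : (fderiv ℝ f a).ker →L[ℝ] G) y := by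
    intro y hy
    obtain ⟨hy₁, hy₂⟩ := hball y hy
    have hgφ := (hg _ hy₁.self_of_nhds).hasFDerivAt.comp y hy₂.hasFDerivAt
    have hfφ : fderiv ℝ (f ∘ φ) y = 0 := by rw [hy₁.fderiv_eq, fderiv_const_apply]
    rw [fderiv_comp y (hf.differentiable one_ne_zero _) hy₂] at hfφ
    convert! hgφ
    ext w
    exact (hg' _ hy₁.self_of_nhds _ (DFunLike.congr_fun hfφ w)).symm
  rw [← hmap, Filter.eventually_map]
  filter_upwards [Metric.ball_mem_nhds 0 hε] with y hy
  rw [← congrArg g hφ0]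
  exact Metric.isOpen_ball.is_const_of_fderiv_eq_zero (𝕜 := ℝ) (f := g ∘ φ)
    (convex_ball 0 ε).isPreconnected
    (fun z hz ↦ (hderiv z hz).differentiableAt.differentiableWithinAt)
    (fun z hz ↦ (hderiv z hz).fderiv) hy (Metric.mem_ball_self hε)

lemma eq_of_fderiv_eq_zero_on_levelSet {c : F} (hf : ContDiff ℝ 1 f)
    (hconn : IsPreconnected (f ⁻¹' {c})) (hsurj : ∀ x, f x = c → (fderiv ℝ f x).range = ⊤)
    (hg : ∀ x, f x = c → DifferentiableAt ℝ g x)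
    (hg' : ∀ x, f x = c → ∀ v, fderiv ℝ f x v = 0 → fderiv ℝ g x v = 0)
    {x y : E} (hx : f x = c) (hy : f y = c) : g x = g y := by
  have : PreconnectedSpace (f ⁻¹' {c}) := isPreconnected_iff_preconnectedSpace.1 hconn
  have hloc : IsLocallyConstant fun z : f ⁻¹' {c} ↦ g z := by
    rw [IsLocallyConstant.iff_eventually_eq]
    rintro ⟨z, hz⟩
    obtain rfl : f z = c := hz
    exact (eventually_nhds_subtype_iff (f ⁻¹' {f z}) ⟨z, rfl⟩ (g · = g z)).2
      (eventually_eq_on_levelSet_of_fderiv_eq_zero hf (hsurj z rfl) hg hg')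
  exact hloc.apply_eq_of_preconnectedSpace ⟨x, hx⟩ ⟨y, hy⟩

end LevelSets

section GaussMap

variable {E : Type*} [NormedAddCommGroup E] [InnerProductSpace ℝ E] {ν : E → E} {p : E}

/-- The pointwise identities of a unit normal field `ν` along a hypersurface: `ν` has length one,
the Weingarten map `dν` takes values in the tangent space and is self-adjoint there. -/
structure IsGaussMapAt (ν : E → E) (p : E) : Prop where
  norm_eq_one : ‖ν p‖ = 1
  inner_fderiv_eq_zero (v : E) : ⟪ν p, fderiv ℝ ν p v⟫ = 0
  inner_fderiv_comm {u w : E} : ⟪ν p, u⟫ = 0 → ⟪ν p, w⟫ = 0 →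
    ⟪fderiv ℝ ν p u, w⟫ = ⟪u, fderiv ℝ ν p w⟫

/-- All principal curvatures of the hypersurface with unit normal field `ν` are `0` or `κ` at `p`.
The Weingarten map `S = dν` being diagonalizable, this is encoded as `S ∘ S = κ • S`. -/
def HasCurvaturesZeroOr (κ : ℝ) (ν : E → E) (p : E) : Prop :=
  ∀ v, ⟪ν p, v⟫ = 0 → fderiv ℝ ν p (fderiv ℝ ν p v) = κ • fderiv ℝ ν p v

lemma inner_fderiv_eq_zero_of_norm_eq_one (hd : DifferentiableAt ℝ ν p)
    (hunit : ∀ᶠ q in 𝓝 p, ‖ν q‖ = 1) (v : E) : ⟪ν p, fderiv ℝ ν p v⟫ = 0 := by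
  have hconst : (fun q ↦ ⟪ν q, ν q⟫) =ᶠ[𝓝 p] fun _ ↦ 1 :=
    hunit.mono fun q hq ↦ inner_self_eq_one_of_norm_eq_one hq
  have hderiv := congrArg (fun L : E →L[ℝ] ℝ ↦ L v) hconst.fderiv_eq
  simp only [fderiv_inner_apply ℝ hd hd, fderiv_const_apply, zero_apply,
    real_inner_comm] at hderiv
  linarith

end GaussMap

section UnitNormal

variable {E : Type*} [NormedAddCommGroup E] [InnerProductSpace ℝ E] [CompleteSpace E]
  {f : E → ℝ} {p : E}

/-- The normalized gradient, a unit normal field along the regular level sets of `f`. It takes the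
junk value `0` at the critical points of `f`. -/
noncomputable def unitNormal (f : E → ℝ) (p : E) : E := ‖gradient f p‖⁻¹ • gradient f p

lemma norm_unitNormal (h : gradient f p ≠ 0) : ‖unitNormal f p‖ = 1 :=
  norm_smul_inv_norm (𝕜 := ℝ) h

lemma contDiffAt_gradient {n : WithTop ℕ∞} (hf : ContDiffAt ℝ (n + 1) f p) :
    ContDiffAt ℝ n (gradient f) p :=
  (InnerProductSpace.toDual ℝ E).symm.contDiff.contDiffAt.comp p (hf.fderiv_right le_rfl)

lemma contDiffAt_unitNormal {n : WithTop ℕ∞} (hf : ContDiffAt ℝ (n + 1) f p)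
    (h : gradient f p ≠ 0) : ContDiffAt ℝ n (unitNormal f) p :=
  (((contDiffAt_gradient hf).norm ℝ h).inv (norm_ne_zero_iff.2 h)).smul (contDiffAt_gradient hf)

lemma inner_unitNormal (f : E → ℝ) (p v : E) :
    ⟪unitNormal f p, v⟫ = ‖gradient f p‖⁻¹ * fderiv ℝ f p v := by
  rw [unitNormal, real_inner_smul_left, inner_gradient_left]

lemma inner_unitNormal_eq_zero_iff (h : gradient f p ≠ 0) {v : E} :
    ⟪unitNormal f p, v⟫ = 0 ↔ fderiv ℝ f p v = 0 := by
  simp [inner_unitNormal, h]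

lemma fderiv_apply_unitNormal (f : E → ℝ) (p : E) :
    fderiv ℝ f p (unitNormal f p) = ‖gradient f p‖ := by
  rw [← inner_gradient_left, unitNormal, real_inner_smul_right, real_inner_self_eq_norm_sq, sq,
    ← mul_assoc, inv_mul_mul_self]

lemma range_fderiv_eq_top (h : gradient f p ≠ 0) : (fderiv ℝ f p).range = ⊤ :=
  Module.Dual.range_eq_top_of_ne_zero fun h₀ ↦ h <| ext_inner_right ℝ fun v ↦ by
    rw [inner_gradient_left, inner_zero_left]
    exact DFunLike.congr_fun h₀ v

lemma inner_fderiv_unitNormal (hf : ContDiffAt ℝ 2 f p) (h : gradient f p ≠ 0) (u : E) {w : E}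
    (hw : ⟪unitNormal f p, w⟫ = 0) :
    ⟪fderiv ℝ (unitNormal f) p u, w⟫ = ‖gradient f p‖⁻¹ * fderiv ℝ (fderiv ℝ f) p u w := by
  have hgrad : DifferentiableAt ℝ (gradient f) p :=
    (contDiffAt_gradient (n := 1) hf).differentiableAt one_ne_zero
  have hnorm : DifferentiableAt ℝ (fun q ↦ ‖gradient f q‖⁻¹) p :=
    (hgrad.norm ℝ h).inv (norm_ne_zero_iff.2 h)
  have hdf : DifferentiableAt ℝ (fderiv ℝ f) p :=
    (hf.fderiv_right (m := 1) le_rfl).differentiableAt one_ne_zero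
  have hν : DifferentiableAt ℝ (unitNormal f) p := hnorm.smul hgrad
  have heq : (fun q ↦ ⟪unitNormal f q, w⟫) = fun q ↦ ‖gradient f q‖⁻¹ * fderiv ℝ f q w :=
    funext fun q ↦ inner_unitNormal f q w
  have hderiv := congrArg (fderiv ℝ · p u) heq
  rw [inner_unitNormal_eq_zero_iff h] at hw
  simpa [fderiv_inner_apply ℝ hν (differentiableAt_const w),
    fderiv_fun_mul hnorm (hdf.clm_apply (differentiableAt_const w)),
    fderiv_clm_apply hdf (differentiableAt_const w), hw] using hderiv

lemma isGaussMapAt_unitNormal (hf : ContDiffAt ℝ 2 f p) (h : gradient f p ≠ 0) :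
    IsGaussMapAt (unitNormal f) p where
  norm_eq_one := norm_unitNormal h
  inner_fderiv_eq_zero := inner_fderiv_eq_zero_of_norm_eq_one
    ((contDiffAt_unitNormal (n := 1) hf h).differentiableAt one_ne_zero)
    (((contDiffAt_gradient (n := 1) hf).continuousAt.eventually_ne h).mono
      fun _ ↦ norm_unitNormal)
  inner_fderiv_comm {u w} hu hw := by
    rw [real_inner_comm (fderiv ℝ (unitNormal f) p w) u, inner_fderiv_unitNormal hf h u hw,
      inner_fderiv_unitNormal hf h w hu, (hf.isSymmSndFDerivAt (by simp)).eq u w]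

end UnitNormal

section Nullity

variable {E : Type*} [NormedAddCommGroup E] [InnerProductSpace ℝ E] {R : ℝ} {ν : E → E} {p : E}

/-- The relative nullity space at `p` of a hypersurface with unit normal field `ν`: the tangent
directions in which the normal is stationary, i.e. the principal directions of curvature `0`. -/
noncomputable def relativeNullity (ν : E → E) (p : E) : Submodule ℝ E :=
  (ℝ ∙ ν p)ᗮ ⊓ (fderiv ℝ ν p).ker

/-- The operator `v ↦ v - R • dν v` on the tangent space, extended by `0` on the normal line. When
all principal curvatures are `0` or `1/R`, it is the orthogonal projection onto the relative
nullity space; unlike the latter, it is visibly as smooth as `dν`. -/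
noncomputable def nullityProjection (R : ℝ) (ν : E → E) (p : E) : E →L[ℝ] E :=
  (.id ℝ E - R • fderiv ℝ ν p) ∘L (.id ℝ E - InnerProductSpace.rankOne ℝ (ν p) (ν p))

lemma mem_relativeNullity {v : E} :
    v ∈ relativeNullity ν p ↔ ⟪ν p, v⟫ = 0 ∧ fderiv ℝ ν p v = 0 := by
  rw [relativeNullity, Submodule.mem_inf, Submodule.mem_orthogonal_singleton_iff_inner_right]
  rfl

lemma nullityProjection_apply (R : ℝ) (ν : E → E) (p v : E) :
    nullityProjection R ν p v
      = v - ⟪ν p, v⟫ • ν p - R • fderiv ℝ ν p (v - ⟪ν p, v⟫ • ν p) := rfl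

lemma nullityProjection_apply_of_inner_eq_zero {v : E} (hv : ⟪ν p, v⟫ = 0) :
    nullityProjection R ν p v = v - R • fderiv ℝ ν p v := by
  rw [nullityProjection_apply, hv, zero_smul, sub_zero]

lemma nullityProjection_apply_normal (hp : ‖ν p‖ = 1) : nullityProjection R ν p (ν p) = 0 := by
  rw [nullityProjection_apply, inner_self_eq_one_of_norm_eq_one hp, one_smul, sub_self, map_zero,
    smul_zero, sub_self]

lemma nullityProjection_apply_sub_inner_smul (hp : ‖ν p‖ = 1) (v : E) :
    nullityProjection R ν p (v - ⟪ν p, v⟫ • ν p) = nullityProjection R ν p v := by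
  rw [map_sub, map_smul, nullityProjection_apply_normal hp, smul_zero, sub_zero]

lemma inner_sub_inner_smul_eq_zero (hp : ‖ν p‖ = 1) (v : E) : ⟪ν p, v - ⟪ν p, v⟫ • ν p⟫ = 0 := by
  rw [inner_sub_right, real_inner_smul_right, inner_self_eq_one_of_norm_eq_one hp, mul_one,
    sub_self]

lemma inner_sub_inner_smul_right {v : E} (hv : ⟪ν p, v⟫ = 0) (w : E) :
    ⟪v, w - ⟪ν p, w⟫ • ν p⟫ = ⟪v, w⟫ := by
  rw [inner_sub_right, real_inner_smul_right, real_inner_comm (ν p) v, hv, mul_zero, sub_zero]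

lemma contDiffAt_nullityProjection {n : WithTop ℕ∞} (hν : ContDiffAt ℝ (n + 1) ν p) :
    ContDiffAt ℝ n (nullityProjection R ν) p := by
  have hν' : ContDiffAt ℝ n ν p := hν.of_le le_self_add
  have hrank : ContDiffAt ℝ n (fun q ↦ InnerProductSpace.rankOne ℝ (ν q) (ν q)) p := by
    exact ((innerSL ℝ : E →L[ℝ] E →L[ℝ] ℝ).contDiff.contDiffAt.comp p hν').smulRight hν'
  exact (contDiffAt_const.sub ((hν.fderiv_right le_rfl).const_smul R)).clm_comp
    (contDiffAt_const.sub hrank)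

lemma fderiv_nullityProjection_apply (hν : ContDiffAt ℝ 2 ν p) (u : E) {w : E}
    (hw : ⟪ν p, w⟫ = 0) :
    fderiv ℝ (nullityProjection R ν) p u w =
      -⟪fderiv ℝ ν p u, w⟫ • (ν p - R • fderiv ℝ ν p (ν p))
        - R • fderiv ℝ (fderiv ℝ ν) p u w := by
  have hd : HasFDerivAt ν (fderiv ℝ ν p) p := (hν.differentiableAt two_ne_zero).hasFDerivAt
  have hd₂ : HasFDerivAt (fderiv ℝ ν) (fderiv ℝ (fderiv ℝ ν) p) p :=
    ((hν.fderiv_right (m := 1) le_rfl).differentiableAt one_ne_zero).hasFDerivAt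
  have htang := (hasFDerivAt_const w p).sub ((hd.inner ℝ (hasFDerivAt_const w p)).smul hd)
  have hderiv := htang.sub ((hd₂.clm_apply htang).const_smul R)
  have hA := ((contDiffAt_nullityProjection (n := 1) (R := R) hν).differentiableAt
    one_ne_zero).hasFDerivAt.clm_apply (hasFDerivAt_const w p)
  calc fderiv ℝ (nullityProjection R ν) p u w
      = -(⟪fderiv ℝ ν p u, w⟫ • ν p) - R • (fderiv ℝ (fderiv ℝ ν) p u w
          - ⟪fderiv ℝ ν p u, w⟫ • fderiv ℝ ν p (ν p)) := by
        simpa [hw, sub_eq_add_neg, add_comm] using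
          congrArg (fun L : E →L[ℝ] E ↦ L u) (hA.unique hderiv)
    _ = _ := by module

lemma fderiv_nullityProjection_comm (hν : ContDiffAt ℝ 2 ν p) (hp : IsGaussMapAt ν p)
    {u w : E} (hu : ⟪ν p, u⟫ = 0) (hw : ⟪ν p, w⟫ = 0) :
    fderiv ℝ (nullityProjection R ν) p u w = fderiv ℝ (nullityProjection R ν) p w u := by
  rw [fderiv_nullityProjection_apply hν u hw, fderiv_nullityProjection_apply hν w hu,
    hp.inner_fderiv_comm hu hw, real_inner_comm u, (hν.isSymmSndFDerivAt (by simp)).eq u w]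

lemma inner_normal_nullityProjection (hp : IsGaussMapAt ν p) (v : E) :
    ⟪ν p, nullityProjection R ν p v⟫ = 0 := by
  rw [nullityProjection_apply, inner_sub_right, inner_sub_inner_smul_eq_zero hp.norm_eq_one,
    real_inner_smul_right, hp.inner_fderiv_eq_zero, mul_zero, sub_zero]

lemma inner_nullityProjection_comm (hp : IsGaussMapAt ν p) (u w : E) :
    ⟪nullityProjection R ν p u, w⟫ = ⟪u, nullityProjection R ν p w⟫ := by
  have htangent {u w : E} (hu : ⟪ν p, u⟫ = 0) (hw : ⟪ν p, w⟫ = 0) :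
      ⟪nullityProjection R ν p u, w⟫ = ⟪u, nullityProjection R ν p w⟫ := by
    rw [nullityProjection_apply_of_inner_eq_zero hu, nullityProjection_apply_of_inner_eq_zero hw,
      inner_sub_left, inner_sub_right, real_inner_smul_left, real_inner_smul_right,
      hp.inner_fderiv_comm hu hw]
  have hA := inner_normal_nullityProjection (R := R) hp
  calc ⟪nullityProjection R ν p u, w⟫
      = ⟪nullityProjection R ν p (u - ⟪ν p, u⟫ • ν p), w - ⟪ν p, w⟫ • ν p⟫ := by
        rw [nullityProjection_apply_sub_inner_smul hp.norm_eq_one,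
          inner_sub_inner_smul_right (hA u)]
    _ = ⟪u - ⟪ν p, u⟫ • ν p, nullityProjection R ν p (w - ⟪ν p, w⟫ • ν p)⟫ :=
        htangent (inner_sub_inner_smul_eq_zero hp.norm_eq_one u)
          (inner_sub_inner_smul_eq_zero hp.norm_eq_one w)
    _ = ⟪u, nullityProjection R ν p w⟫ := by
        rw [nullityProjection_apply_sub_inner_smul hp.norm_eq_one, real_inner_comm,
          inner_sub_inner_smul_right (hA w), real_inner_comm]

lemma fderiv_apply_nullityProjection (hR : R ≠ 0) (hp : ‖ν p‖ = 1)
    (hcurv : HasCurvaturesZeroOr R⁻¹ ν p) (v : E) :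
    fderiv ℝ ν p (nullityProjection R ν p v) = 0 := by
  rw [nullityProjection_apply, map_sub, map_smul, hcurv _ (inner_sub_inner_smul_eq_zero hp v),
    smul_inv_smul₀ hR, sub_self]

lemma nullityProjection_apply_fderiv (hR : R ≠ 0) (hp : IsGaussMapAt ν p)
    (hcurv : HasCurvaturesZeroOr R⁻¹ ν p) {v : E} (hv : ⟪ν p, v⟫ = 0) :
    nullityProjection R ν p (fderiv ℝ ν p v) = 0 := by
  rw [nullityProjection_apply_of_inner_eq_zero (hp.inner_fderiv_eq_zero v), hcurv v hv,
    smul_inv_smul₀ hR, sub_self]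

lemma nullityProjection_nullityProjection (hR : R ≠ 0) (hp : IsGaussMapAt ν p)
    (hcurv : HasCurvaturesZeroOr R⁻¹ ν p) (v : E) :
    nullityProjection R ν p (nullityProjection R ν p v) = nullityProjection R ν p v := by
  rw [nullityProjection_apply_of_inner_eq_zero (inner_normal_nullityProjection hp v),
    fderiv_apply_nullityProjection hR hp.norm_eq_one hcurv, smul_zero, sub_zero]

instance [CompleteSpace E] : (relativeNullity ν p).HasOrthogonalProjection :=
  have : IsClosed (relativeNullity ν p : Set E) :=
    (Submodule.isClosed_orthogonal _).inter (fderiv ℝ ν p).isClosed_ker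
  have := this.completeSpace_coe
  inferInstance

lemma nullityProjection_eq_starProjection [CompleteSpace E] (hR : R ≠ 0) (hp : IsGaussMapAt ν p)
    (hcurv : HasCurvaturesZeroOr R⁻¹ ν p) :
    nullityProjection R ν p = (relativeNullity ν p).starProjection := by
  ext v
  have hmem : nullityProjection R ν p v ∈ relativeNullity ν p := mem_relativeNullity.2
    ⟨inner_normal_nullityProjection hp v,
      fderiv_apply_nullityProjection hR hp.norm_eq_one hcurv v⟩
  refine (Submodule.eq_starProjection_of_mem_of_inner_eq_zero hmem fun w hw ↦ ?_).symm
  obtain ⟨hw₁, hw₂⟩ := mem_relativeNullity.1 hw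
  rw [inner_sub_left, inner_nullityProjection_comm hp,
    nullityProjection_apply_of_inner_eq_zero hw₁, hw₂, smul_zero, sub_zero, sub_self]

end Nullity

section Pigeonhole

variable {E : Type*} [NormedAddCommGroup E] [InnerProductSpace ℝ E]

-- `P` and `1 - P` split each of `u` and `w` into two types. Of two like vectors, `D u w` has the
-- opposite type; of two unlike ones it vanishes, as `D u w = D w u` would have both types. The
-- former case then follows from `⟪D u w, D u w⟫ = ⟪w, D u (D u w)⟫`.
lemma apply_eq_zero_of_symmetric_of_offDiagonal (P : Module.End ℝ E) (D : E → Module.End ℝ E)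
    (hP : ∀ w, P (P w) = P w) (hcomm : ∀ u w, D u w = D w u)
    (hsymm : ∀ u w z, ⟪D u w, z⟫ = ⟪w, D u z⟫)
    (hoff : ∀ u w, D u (P w) + P (D u w) = D u w) (u w : E) : D u w = 0 := by
  have hrange {w} (hw : P w = w) (u) : P (D u w) = 0 := by simpa [hw] using hoff u w
  have hker {w} (hw : P w = 0) (u) : P (D u w) = D u w := by simpa [hw] using hoff u w
  have hmixed {u w} (hu : P u = u) (hw : P w = 0) : D u w = 0 := by
    rw [← hker hw u, hcomm, hrange hu]
  have hmixed' {u w} (hu : P u = 0) (hw : P w = w) : D u w = 0 := by rw [hcomm, hmixed hw hu]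
  have hranges {u w} (hu : P u = u) (hw : P w = w) : D u w = 0 := by
    rw [← inner_self_eq_zero (𝕜 := ℝ), hsymm, hmixed hu (hrange hw u), inner_zero_right]
  have hkers {u w} (hu : P u = 0) (hw : P w = 0) : D u w = 0 := by
    rw [← inner_self_eq_zero (𝕜 := ℝ), hsymm, hmixed' hu (hker hw u), inner_zero_right]
  have hcompl (w) : P (w - P w) = 0 := by rw [map_sub, hP, sub_self]
  have hsplit {u} (h₁ : D u (P w) = 0) (h₂ : D u (w - P w) = 0) : D u w = 0 := by
    rwa [map_sub, h₁, sub_zero] at h₂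
  have h₁ : D w (P u) = 0 := by
    rw [hcomm]
    exact hsplit (hranges (hP u) (hP w)) (hmixed (hP u) (hcompl w))
  have h₂ : D w (u - P u) = 0 := by
    rw [hcomm]
    exact hsplit (hmixed' (hcompl u) (hP w)) (hkers (hcompl u) (hcompl w))
  rwa [map_sub, h₁, sub_zero, hcomm] at h₂

end Pigeonhole

section Rigidity

variable {E : Type*} [NormedAddCommGroup E] [InnerProductSpace ℝ E] {R : ℝ} {p : E}

lemma inner_fderiv_apply_comm {A : E → E →L[ℝ] E} (hA : DifferentiableAt ℝ A p)
    (hsymm : ∀ᶠ q in 𝓝 p, ∀ v w, ⟪A q v, w⟫ = ⟪v, A q w⟫) (u v w : E) :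
    ⟪fderiv ℝ A p u v, w⟫ = ⟪v, fderiv ℝ A p u w⟫ := by
  have heq : (fun q ↦ ⟪A q v, w⟫) =ᶠ[𝓝 p] fun q ↦ ⟪v, A q w⟫ := hsymm.mono fun q hq ↦ hq v w
  have hderiv := congrArg (fun L : E →L[ℝ] ℝ ↦ L u) heq.fderiv_eq
  have hd (w : E) : DifferentiableAt ℝ (fun q ↦ A q w) p := hA.clm_apply (differentiableAt_const w)
  simpa [fderiv_inner_apply ℝ (hd v) (differentiableAt_const w),
    fderiv_inner_apply ℝ (differentiableAt_const v) (hd w),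
    fderiv_clm_apply hA (differentiableAt_const _)] using hderiv

lemma fderiv_apply_apply_normal {ν : E → E} {A : E → E →L[ℝ] E} (hA : DifferentiableAt ℝ A p)
    (hν : DifferentiableAt ℝ ν p) (hAν : ∀ᶠ q in 𝓝 p, A q (ν q) = 0) (u : E) :
    fderiv ℝ A p u (ν p) = -A p (fderiv ℝ ν p u) := by
  have heq : (fun q ↦ A q (ν q)) =ᶠ[𝓝 p] fun _ ↦ 0 := hAν
  have hderiv := congrArg (fun L : E →L[ℝ] E ↦ L u) heq.fderiv_eq
  rw [fderiv_clm_apply hA hν] at hderiv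
  rw [eq_neg_iff_add_eq_zero, add_comm]
  simpa using hderiv

lemma fderiv_nullityProjection_tangential_comm {ν : E → E} (hν : ContDiffAt ℝ 2 ν p)
    (hgauss : ∀ᶠ q in 𝓝 p, IsGaussMapAt ν q) (hR : R ≠ 0) (hcurv : HasCurvaturesZeroOr R⁻¹ ν p)
    (u w : E) :
    fderiv ℝ (nullityProjection R ν) p (u - ⟪ν p, u⟫ • ν p) w =
      fderiv ℝ (nullityProjection R ν) p (w - ⟪ν p, w⟫ • ν p) u := by
  have hp := hgauss.self_of_nhds
  have htan := inner_sub_inner_smul_eq_zero hp.norm_eq_one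
  have hA : DifferentiableAt ℝ (nullityProjection R ν) p :=
    (contDiffAt_nullityProjection (n := 1) hν).differentiableAt one_ne_zero
  have hnormal {v} (hv : ⟪ν p, v⟫ = 0) : fderiv ℝ (nullityProjection R ν) p v (ν p) = 0 := by
    rw [fderiv_apply_apply_normal hA (hν.differentiableAt two_ne_zero)
      (hgauss.mono fun q hq ↦ nullityProjection_apply_normal hq.norm_eq_one),
      nullityProjection_apply_fderiv hR hp hcurv hv, neg_zero]
  have hsub {v} (hv : ⟪ν p, v⟫ = 0) (w) : fderiv ℝ (nullityProjection R ν) p v w =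
      fderiv ℝ (nullityProjection R ν) p v (w - ⟪ν p, w⟫ • ν p) := by
    rw [map_sub, map_smul, hnormal hv, smul_zero, sub_zero]
  rw [hsub (htan u), hsub (htan w), fderiv_nullityProjection_comm hν hp (htan u) (htan w)]

variable [CompleteSpace E] {f : E → ℝ}

lemma fderiv_apply_of_isIdempotentElem_on_levelSet {A : E → E →L[ℝ] E}
    (hf : ContDiffAt ℝ 1 f p) (hreg : gradient f p ≠ 0) (hA : DifferentiableAt ℝ A p)
    (hidem : ∀ q, f q = f p → ∀ w, A q (A q w) = A q w) {u : E} (hu : fderiv ℝ f p u = 0) (w : E) :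
    fderiv ℝ A p u (A p w) + A p (fderiv ℝ A p u w) = fderiv ℝ A p u w := by
  have hAw : DifferentiableAt ℝ (fun q ↦ A q w) p := hA.clm_apply (differentiableAt_const w)
  have hzero := fderiv_apply_eq_zero_of_const_on_levelSet (g := fun q ↦ A q (A q w) - A q w) hf
    (range_fderiv_eq_top hreg) ((hA.clm_apply hAw).sub hAw)
    (fun q hq ↦ sub_eq_zero.2 (hidem q hq w)) hu
  rw [fderiv_fun_sub (hA.clm_apply hAw) hAw, fderiv_clm_apply hA hAw,
    fderiv_clm_apply hA (differentiableAt_const w)] at hzero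
  rw [← sub_eq_zero, ← hzero]
  simp [add_comm]

lemma fderiv_nullityProjection_unitNormal_eq_zero (hf : ContDiff ℝ 3 f)
    (hreg : ∀ q, f q = f p → gradient f q ≠ 0) (hR : R ≠ 0)
    (hcurv : ∀ q, f q = f p → HasCurvaturesZeroOr R⁻¹ (unitNormal f) q) {u : E}
    (hu : fderiv ℝ f p u = 0) : fderiv ℝ (nullityProjection R (unitNormal f)) p u = 0 := by
  set ν := unitNormal f
  set A := nullityProjection R ν
  have hgauss {q} (hq : gradient f q ≠ 0) : IsGaussMapAt ν q :=
    isGaussMapAt_unitNormal (hf.contDiffAt.of_le (by norm_num)) hq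
  have hnear : ∀ᶠ q in 𝓝 p, IsGaussMapAt ν q :=
    ((contDiffAt_gradient (n := 2) hf.contDiffAt).continuousAt.eventually_ne (hreg p rfl)).mono
      fun q hq ↦ hgauss hq
  have hν : ContDiffAt ℝ 2 ν p := contDiffAt_unitNormal (n := 2) hf.contDiffAt (hreg p rfl)
  have hA : DifferentiableAt ℝ A p :=
    (contDiffAt_nullityProjection (n := 1) hν).differentiableAt one_ne_zero
  have htan (v) : ⟪ν p, v - ⟪ν p, v⟫ • ν p⟫ = 0 :=
    inner_sub_inner_smul_eq_zero hnear.self_of_nhds.norm_eq_one v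
  have hzero (v) : fderiv ℝ A p (u - ⟪ν p, u⟫ • ν p) v = 0 :=
    apply_eq_zero_of_symmetric_of_offDiagonal (A p : Module.End ℝ E)
      (fun v ↦ (fderiv ℝ A p (v - ⟪ν p, v⟫ • ν p) : Module.End ℝ E))
      (nullityProjection_nullityProjection hR (hgauss (hreg p rfl)) (hcurv p rfl))
      (fderiv_nullityProjection_tangential_comm hν hnear hR (hcurv p rfl))
      (fun v ↦ inner_fderiv_apply_comm hA
        (hnear.mono fun q hq ↦ inner_nullityProjection_comm hq) _)
      (fun v ↦ fderiv_apply_of_isIdempotentElem_on_levelSet (hf.contDiffAt.of_le (by norm_num))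
        (hreg p rfl) hA
        (fun q hq ↦ nullityProjection_nullityProjection hR (hgauss (hreg q hq)) (hcurv q hq))
        ((inner_unitNormal_eq_zero_iff (hreg p rfl)).1 (htan v))) u v
  have hu' : ⟪ν p, u⟫ = 0 := (inner_unitNormal_eq_zero_iff (hreg p rfl)).2 hu
  ext v
  simpa [hu'] using hzero v

lemma nullityProjection_unitNormal_eq (hf : ContDiff ℝ 3 f) {c : ℝ}
    (hconn : IsPreconnected (f ⁻¹' {c})) (hreg : ∀ q, f q = c → gradient f q ≠ 0) (hR : R ≠ 0)
    (hcurv : ∀ q, f q = c → HasCurvaturesZeroOr R⁻¹ (unitNormal f) q) {q : E}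
    (hp : f p = c) (hq : f q = c) :
    nullityProjection R (unitNormal f) q = nullityProjection R (unitNormal f) p := by
  refine eq_of_fderiv_eq_zero_on_levelSet (hf.of_le (by norm_num)) hconn
    (fun x hx ↦ range_fderiv_eq_top (hreg x hx)) (fun x hx ↦ ?_) ?_ hq hp
  · exact (contDiffAt_nullityProjection (n := 1) (contDiffAt_unitNormal (n := 2) hf.contDiffAt
      (hreg x hx))).differentiableAt one_ne_zero
  · rintro x rfl v hv
    exact fderiv_nullityProjection_unitNormal_eq_zero hf hreg hR hcurv hv

lemma starProjection_orthogonal_relativeNullity_sub (hf : ContDiff ℝ 3 f) {c : ℝ}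
    (hconn : IsPreconnected (f ⁻¹' {c})) (hreg : ∀ q, f q = c → gradient f q ≠ 0) (hR : R ≠ 0)
    (hcurv : ∀ q, f q = c → HasCurvaturesZeroOr R⁻¹ (unitNormal f) q) {q : E}
    (hp : f p = c) (hq : f q = c) :
    (relativeNullity (unitNormal f) p)ᗮ.starProjection (q - (p - R • unitNormal f p)) =
      R • unitNormal f q := by
  set ν := unitNormal f
  set P := (relativeNullity ν p)ᗮ.starProjection
  have hgauss (x) (hx : f x = c) : IsGaussMapAt ν x :=
    isGaussMapAt_unitNormal (hf.contDiffAt.of_le (by norm_num)) (hreg x hx)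
  have hP (x) (hx : f x = c) (v) : P v = v - nullityProjection R ν x v := by
    rw [Submodule.starProjection_orthogonal_val, nullityProjection_unitNormal_eq hf hconn hreg hR
      hcurv hp hx, nullityProjection_eq_starProjection hR (hgauss p hp) (hcurv p hp)]
  have hPν (x) (hx : f x = c) : P (ν x) = ν x := by
    rw [hP x hx, nullityProjection_apply_normal (hgauss x hx).norm_eq_one, sub_zero]
  have hν (x) (hx : f x = c) : DifferentiableAt ℝ ν x :=
    (contDiffAt_unitNormal (n := 2) hf.contDiffAt (hreg x hx)).differentiableAt two_ne_zero
  have hfocal (x) (hx : f x = c) : HasFDerivAt (fun y ↦ P (y - R • ν y))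
      (P ∘L (.id ℝ E - R • fderiv ℝ ν x)) x :=
    P.hasFDerivAt.comp x ((hasFDerivAt_id x).sub ((hν x hx).hasFDerivAt.const_smul R))
  have hconst : P (q - R • ν q) = P (p - R • ν p) := by
    refine eq_of_fderiv_eq_zero_on_levelSet (hf.of_le (by norm_num)) hconn
      (fun x hx ↦ range_fderiv_eq_top (hreg x hx)) (fun x hx ↦ (hfocal x hx).differentiableAt)
      (fun x hx v hv ↦ ?_) hq hp
    rw [← inner_unitNormal_eq_zero_iff (hreg x hx)] at hv
    rw [(hfocal x hx).fderiv, ContinuousLinearMap.comp_apply]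
    change P (v - R • fderiv ℝ ν x v) = 0
    rw [← nullityProjection_apply_of_inner_eq_zero hv, hP x hx,
      nullityProjection_nullityProjection hR (hgauss x hx) (hcurv x hx), sub_self]
  rw [map_sub, ← hconst, map_sub, map_smul, hPν q hq, sub_sub_cancel]

end Rigidity

section Cylinder

variable {E : Type*} [NormedAddCommGroup E] [InnerProductSpace ℝ E]

lemma infDist_mk'_eq_norm_starProjection_orthogonal (K : Submodule ℝ E)
    [K.HasOrthogonalProjection] (a q : E) :
    Metric.infDist q (AffineSubspace.mk' a K) = ‖Kᗮ.starProjection (q - a)‖ := by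
  have hdecomp : a + K.starProjection (q - a) + Kᗮ.starProjection (q - a) = q := by
    rw [Submodule.starProjection_orthogonal_val]
    abel
  have hmem : a + K.starProjection (q - a) ∈ AffineSubspace.mk' a K := by
    rw [AffineSubspace.mem_mk', vsub_eq_sub, add_sub_cancel_left]
    exact K.starProjection_apply_mem _
  refine le_antisymm ?_ ((Metric.le_infDist ⟨_, hmem⟩).2 fun x hx ↦ ?_)
  · calc Metric.infDist q (AffineSubspace.mk' a K)
        ≤ dist q (a + K.starProjection (q - a)) := Metric.infDist_le_dist_of_mem hmem
      _ = ‖Kᗮ.starProjection (q - a)‖ := by rw [dist_eq_norm, sub_eq_of_eq_add' hdecomp.symm]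
  · have hx₀ : Kᗮ.starProjection (x - a) = 0 := by
      rw [Submodule.starProjection_apply_eq_zero_iff]
      exact K.le_orthogonal_orthogonal (AffineSubspace.mem_mk'.1 hx)
    calc ‖Kᗮ.starProjection (q - a)‖ = ‖Kᗮ.starProjection (q - x)‖ := by
          rw [← sub_add_sub_cancel q x a, map_add, hx₀, add_zero]
      _ ≤ ‖q - x‖ := Kᗮ.norm_starProjection_apply_le _
      _ = dist q x := (dist_eq_norm q x).symm

lemma isPreconnected_setOf_norm_starProjection_orthogonal_eq (K : Submodule ℝ E)
    [K.HasOrthogonalProjection] (hK : 1 < Module.rank ℝ Kᗮ) (a : E) (R : ℝ) :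
    IsPreconnected {q | ‖Kᗮ.starProjection (q - a)‖ = R} := by
  have himage : {q | ‖Kᗮ.starProjection (q - a)‖ = R} =
      (fun y : K × Kᗮ ↦ a + (y.1 + y.2 : E)) '' (Set.univ ×ˢ Metric.sphere 0 R) := by
    ext q
    constructor
    · intro hq
      refine ⟨(K.orthogonalProjectionOnto (q - a), Kᗮ.orthogonalProjectionOnto (q - a)),
        ⟨trivial, mem_sphere_zero_iff_norm.2 hq⟩, ?_⟩
      change a + (K.starProjection (q - a) + Kᗮ.starProjection (q - a)) = q
      rw [Submodule.starProjection_orthogonal_val, add_sub_cancel, add_sub_cancel]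
    · rintro ⟨⟨k, n⟩, ⟨-, hn⟩, rfl⟩
      have hk : Kᗮ.starProjection (k : E) = 0 :=
        (Submodule.starProjection_apply_eq_zero_iff _).2 (K.le_orthogonal_orthogonal k.2)
      have hn' : Kᗮ.starProjection (n : E) = n := Submodule.starProjection_eq_self_iff.2 n.2
      change ‖Kᗮ.starProjection (a + (k + n : E) - a)‖ = R
      rw [add_sub_cancel_left, map_add, hk, hn', zero_add]
      exact mem_sphere_zero_iff_norm.1 hn
  rw [himage]
  exact (isPreconnected_univ.prod (isPreconnected_sphere hK 0 R)).image _ (by fun_prop)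

lemma one_lt_rank_of_inner_eq_zero {K : Submodule ℝ E} {v w : E} (hv : v ∈ K) (hw : w ∈ K)
    (hv₀ : v ≠ 0) (hw₀ : w ≠ 0) (hvw : ⟪v, w⟫ = 0) : 1 < Module.rank ℝ K := by
  have hli : LinearIndependent ℝ ![(⟨v, hv⟩ : K), ⟨w, hw⟩] := by
    refine linearIndependent_of_ne_zero_of_inner_eq_zero (𝕜 := ℝ) ?_ ?_
    · simp [Fin.forall_fin_two, hv₀, hw₀]
    · simp [Pairwise, Fin.forall_fin_two, hvw, real_inner_comm v w]
  exact Cardinal.one_lt_two.trans_le (by simpa using hli.cardinal_lift_le_rank)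

lemma one_lt_rank_orthogonal_relativeNullity {ν : E → E} {p : E} (hp : IsGaussMapAt ν p)
    (hcurved : ∃ v, ⟪ν p, v⟫ = 0 ∧ fderiv ℝ ν p v ≠ 0) :
    1 < Module.rank ℝ (relativeNullity ν p)ᗮ := by
  obtain ⟨v, hv, hSv⟩ := hcurved
  have hν : ν p ∈ (relativeNullity ν p)ᗮ := fun w hw ↦ by
    rw [real_inner_comm, (mem_relativeNullity.1 hw).1]
  have hS : fderiv ℝ ν p v ∈ (relativeNullity ν p)ᗮ := fun w hw ↦ by
    obtain ⟨hw₁, hw₂⟩ := mem_relativeNullity.1 hw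
    rw [← hp.inner_fderiv_comm hw₁ hv, hw₂, inner_zero_left]
  have hν₀ : ν p ≠ 0 := norm_ne_zero_iff.1 (hp.norm_eq_one ▸ one_ne_zero)
  exact one_lt_rank_of_inner_eq_zero hν hS hν₀ hSv (hp.inner_fderiv_eq_zero v)

end Cylinder

section RadialCrossing

lemma eq_of_isPreconnected_of_eventually_mem {X : Type*} [TopologicalSpace X] {s t : Set X}
    (ht : IsPreconnected t) (hs : IsClosed s) (hne : s.Nonempty) (hst : s ⊆ t)
    (hopen : ∀ x ∈ s, ∀ᶠ y in 𝓝[t] x, y ∈ s) : s = t := by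
  have : PreconnectedSpace t := isPreconnected_iff_preconnectedSpace.1 ht
  have hclopen : IsClopen ((↑) ⁻¹' s : Set t) := by
    refine ⟨hs.preimage continuous_subtype_val, isOpen_iff_mem_nhds.2 fun x hx ↦ ?_⟩
    exact (eventually_nhds_subtype_iff t x (· ∈ s)).2 (hopen x hx)
  obtain ⟨x, hx⟩ := hne
  have huniv := hclopen.eq_univ ⟨⟨x, hst hx⟩, hx⟩
  exact hst.antisymm fun y hy ↦ huniv.ge (Set.mem_univ (⟨y, hy⟩ : t))

lemma exists_lt_lt_of_deriv_pos {g : ℝ → ℝ} {x ε : ℝ} (hg : 0 < deriv g x) (hε : 0 < ε) :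
    ∃ δ > 0, δ < ε ∧ g (x - δ) < g x ∧ g x < g (x + δ) := by
  obtain ⟨r, hr, hsign⟩ := Metric.eventually_nhds_iff.1 <|
    eventually_nhdsWithin_sign_eq_of_deriv_pos (f := fun y ↦ g y - g x) (x₀ := x)
      (by rwa [deriv_sub_const]) (sub_self _)
  obtain ⟨δ, hδ, hδ'⟩ := exists_between (lt_min hε hr)
  obtain ⟨hδε, hδr⟩ := lt_min_iff.1 hδ'
  refine ⟨δ, hδ, hδε, ?_, ?_⟩
  · have hleft := hsign (y := x - δ) (by simpa [abs_of_pos hδ] using hδr)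
    rwa [sub_sub_cancel_left, sign_neg (neg_neg_of_pos hδ), sign_eq_neg_one_iff, sub_neg] at hleft
  · have hright := hsign (y := x + δ) (by simpa [abs_of_pos hδ] using hδr)
    rwa [add_sub_cancel_left, sign_pos hδ, sign_eq_one_iff, sub_pos] at hright

variable {E : Type*} [NormedAddCommGroup E] [NormedSpace ℝ E] {f : E → ℝ} {p : E}

lemma eventually_exists_apply_add_smul_eq_of_fderiv_pos {V : E → E} (hf : Continuous f)
    (hfp : DifferentiableAt ℝ f p) (hV : ContinuousAt V p) (hpos : 0 < fderiv ℝ f p (V p))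
    {ε : ℝ} (hε : 0 < ε) : ∀ᶠ q in 𝓝 p, ∃ s : ℝ, |s| < ε ∧ f (q + s • V q) = f p := by
  obtain ⟨δ, hδ, hδε, hlt, hgt⟩ := exists_lt_lt_of_deriv_pos (g := fun s ↦ f (p + s • V p))
    (x := 0) (hpos.trans_eq hfp.lineDeriv_eq_fderiv.symm) hε
  rw [zero_sub, zero_smul, add_zero] at hlt
  rw [zero_add, zero_smul, add_zero] at hgt
  have hcont (s : ℝ) : ContinuousAt (fun q ↦ f (q + s • V q)) p :=
    hf.continuousAt.comp (continuousAt_id.add (hV.const_smul s))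
  filter_upwards [(hcont (-δ)).eventually_lt_const hlt, (hcont δ).eventually_const_lt hgt]
    with q hq₁ hq₂
  obtain ⟨s, hs, hfs⟩ := intermediate_value_Icc (by linarith : -δ ≤ δ)
    (f := fun s : ℝ ↦ f (q + s • V q)) (by fun_prop) ⟨hq₁.le, hq₂.le⟩
  exact ⟨s, (abs_le.2 hs).trans_lt hδε, hfs⟩

-- Moving `q` along `P (q - a)` multiplies `‖P (q - a)‖` by `1 + s`, so the ray through a point of
-- the cylinder can meet the level set, which lies on the cylinder, only at that point.
lemma eventually_eq_of_fderiv_radial_pos (P : E →L[ℝ] E) (hP : ∀ v, P (P v) = P v) {a : E}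
    {R : ℝ} (hf : Continuous f) (hfp : DifferentiableAt ℝ f p)
    (hcyl : ∀ q, f q = f p → ‖P (q - a)‖ = R) (hpos : 0 < fderiv ℝ f p (P (p - a))) :
    ∀ᶠ q in 𝓝[{q | ‖P (q - a)‖ = R}] p, f q = f p := by
  have hR : R ≠ 0 := by
    rintro rfl
    rw [norm_eq_zero.1 (hcyl p rfl), map_zero] at hpos
    exact hpos.false
  have hV : ContinuousAt (fun q ↦ P (q - a)) p := by fun_prop
  filter_upwards [self_mem_nhdsWithin, nhdsWithin_le_nhds
    (eventually_exists_apply_add_smul_eq_of_fderiv_pos hf hfp hV hpos one_pos)]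
    with q (hq : ‖P (q - a)‖ = R) ⟨s, hs, hfs⟩
  have hscale : (1 + s) * R = R := by
    have hpush : P (q + s • P (q - a) - a) = (1 + s) • P (q - a) := by
      rw [add_sub_right_comm, map_add, map_smul, hP, add_smul, one_smul]
    have hnorm := hcyl _ hfs
    rwa [hpush, norm_smul, hq, Real.norm_of_nonneg (by linarith [(abs_lt.1 hs).1])] at hnorm
  have hs₀ : s = 0 := by simpa [hR] using hscale
  rwa [hs₀, zero_smul, add_zero] at hfs

end RadialCrossing

lemma coe_mk'_span_singleton {k V : Type*} [Ring k] [AddCommGroup V] [Module k V] (a d : V) :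
    (AffineSubspace.mk' a (k ∙ d) : Set V) = {x | ∃ t : k, x = a + t • d} := by
  ext x
  simp [AffineSubspace.mem_mk', Submodule.mem_span_singleton, eq_sub_iff_add_eq', eq_comm]

section PrincipalFrame

variable {E : Type*} [NormedAddCommGroup E] [InnerProductSpace ℝ E] {ν : E → E} {p e₁ e₂ : E}
  {κ : ℝ}

/-- The tangent vectors `e₁`, `e₂` complete the unit normal `ν p` of a surface to an orthonormal
frame and are principal directions of curvatures `0` and `κ`, respectively. -/
structure IsPrincipalFrame (κ : ℝ) (ν : E → E) (p e₁ e₂ : E) : Prop where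
  orthonormal : Orthonormal ℝ ![ν p, e₁, e₂]
  fderiv_left : fderiv ℝ ν p e₁ = 0
  fderiv_right : fderiv ℝ ν p e₂ = κ • e₂

lemma orthonormal_vecCons_three {n : E} (hn : ‖n‖ = 1) (h₁ : ‖e₁‖ = 1) (h₂ : ‖e₂‖ = 1)
    (h₁₂ : ⟪e₁, e₂⟫ = 0) (hn₁ : ⟪e₁, n⟫ = 0) (hn₂ : ⟪e₂, n⟫ = 0) :
    Orthonormal ℝ ![n, e₁, e₂] := by
  simp [orthonormal_vecCons_iff, Fin.forall_fin_two, hn, h₁, h₂, h₁₂, real_inner_comm, hn₁, hn₂]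

lemma orthogonal_span_singleton_le_span_pair (hE : Module.finrank ℝ E = 3) {n : E}
    (h : Orthonormal ℝ ![n, e₁, e₂]) : (ℝ ∙ n)ᗮ ≤ Submodule.span ℝ {e₁, e₂} := by
  have : FiniteDimensional ℝ E := .of_finrank_pos (by omega)
  let b := basisOfOrthonormalOfCardEqFinrank h (by simp [hE])
  intro v hv
  have hv' : ⟪n, v⟫ = 0 := Submodule.mem_orthogonal_singleton_iff_inner_right.1 hv
  have hsum := (b.toOrthonormalBasis (by simpa [b] using h)).sum_repr' v
  exact Submodule.mem_span_pair.2
    ⟨⟪e₁, v⟫, ⟪e₂, v⟫, by simpa [Fin.sum_univ_three, b, hv'] using hsum⟩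

namespace IsPrincipalFrame

lemma inner_normal_left (h : IsPrincipalFrame κ ν p e₁ e₂) : ⟪ν p, e₁⟫ = 0 :=
  h.orthonormal.inner_eq_zero (i := 0) (j := 1) (by decide)

lemma inner_normal_right (h : IsPrincipalFrame κ ν p e₁ e₂) : ⟪ν p, e₂⟫ = 0 :=
  h.orthonormal.inner_eq_zero (i := 0) (j := 2) (by decide)

lemma fderiv_right_ne_zero (h : IsPrincipalFrame κ ν p e₁ e₂) (hκ : κ ≠ 0) :
    fderiv ℝ ν p e₂ ≠ 0 := by
  rw [h.fderiv_right]
  exact smul_ne_zero hκ (h.orthonormal.ne_zero 2)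

lemma exists_eq_smul_add_smul (h : IsPrincipalFrame κ ν p e₁ e₂)
    (hE : Module.finrank ℝ E = 3) {v : E} (hv : ⟪ν p, v⟫ = 0) : ∃ s t : ℝ, s • e₁ + t • e₂ = v :=
  Submodule.mem_span_pair.1 <| orthogonal_span_singleton_le_span_pair hE h.orthonormal <|
    Submodule.mem_orthogonal_singleton_iff_inner_right.2 hv

lemma hasCurvaturesZeroOr (h : IsPrincipalFrame κ ν p e₁ e₂) (hE : Module.finrank ℝ E = 3) :
    HasCurvaturesZeroOr κ ν p := by
  intro v hv
  obtain ⟨s, t, rfl⟩ := h.exists_eq_smul_add_smul hE hv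
  simp only [map_add, map_smul, h.fderiv_left, h.fderiv_right, smul_zero, zero_add]
  rw [smul_comm t κ]

lemma relativeNullity_eq (h : IsPrincipalFrame κ ν p e₁ e₂) (hE : Module.finrank ℝ E = 3)
    (hκ : κ ≠ 0) : relativeNullity ν p = ℝ ∙ e₁ := by
  refine le_antisymm (fun v hv ↦ ?_) ?_
  · obtain ⟨hvν, hSv⟩ := mem_relativeNullity.1 hv
    obtain ⟨s, t, rfl⟩ := h.exists_eq_smul_add_smul hE hvν
    have ht : t = 0 := by
      simpa [h.fderiv_left, h.fderiv_right_ne_zero hκ] using hSv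
    rw [ht, zero_smul, add_zero]
    exact Submodule.smul_mem _ _ (Submodule.mem_span_singleton_self e₁)
  · rw [Submodule.span_singleton_le_iff_mem, mem_relativeNullity]
    exact ⟨h.inner_normal_left, h.fderiv_left⟩

end IsPrincipalFrame

end PrincipalFrame

theorem stmt_15_general {E : Type*} [NormedAddCommGroup E] [InnerProductSpace ℝ E]
    [CompleteSpace E] (f : E → ℝ) (hf : ContDiff ℝ 3 f) {c : ℝ}
    (hconn : IsPreconnected (f ⁻¹' {c})) (hreg : ∀ q, f q = c → gradient f q ≠ 0)
    {R : ℝ} (hR : 0 < R) (hcurv : ∀ q, f q = c → HasCurvaturesZeroOr R⁻¹ (unitNormal f) q)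
    {p : E} (hp : f p = c)
    (hcurved : ∃ v, ⟪unitNormal f p, v⟫ = 0 ∧ fderiv ℝ (unitNormal f) p v ≠ 0) :
    f ⁻¹' {c} = {q | Metric.infDist q (AffineSubspace.mk' (p - R • unitNormal f p)
      (relativeNullity (unitNormal f) p)) = R} := by
  set K := relativeNullity (unitNormal f) p
  set a := p - R • unitNormal f p
  have hproj {q} (hq : f q = c) : Kᗮ.starProjection (q - a) = R • unitNormal f q :=
    starProjection_orthogonal_relativeNullity_sub hf hconn hreg hR.ne' hcurv hp hq
  have hcyl (q) (hq : f q = c) : ‖Kᗮ.starProjection (q - a)‖ = R := by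
    rw [hproj hq, norm_smul, norm_unitNormal (hreg q hq), mul_one, Real.norm_of_nonneg hR.le]
  have hrank : 1 < Module.rank ℝ Kᗮ := one_lt_rank_orthogonal_relativeNullity
    (isGaussMapAt_unitNormal (hf.contDiffAt.of_le (by norm_num)) (hreg p hp)) hcurved
  simp only [infDist_mk'_eq_norm_starProjection_orthogonal]
  refine eq_of_isPreconnected_of_eventually_mem
    (isPreconnected_setOf_norm_starProjection_orthogonal_eq K hrank a R)
    (isClosed_singleton.preimage hf.continuous) ⟨p, hp⟩ hcyl ?_
  rintro q rfl
  refine eventually_eq_of_fderiv_radial_pos _ (fun v ↦ ?_) hf.continuous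
    (hf.differentiable (by norm_num) q) hcyl ?_
  · exact Submodule.starProjection_eq_self_iff.2 (Kᗮ.starProjection_apply_mem v)
  · rw [hproj rfl, map_smul, fderiv_apply_unitNormal]
    exact mul_pos hR (norm_pos_iff.2 (hreg q rfl))

/-- A complete connected surface in ℝ³ (realized as a regular level set
`M = f⁻¹(0)` of a smooth function, with unit normal `ν = ∇f/|∇f|`) whose
principal curvatures are identically `0` and the nonzero constant `1/R`
(i.e. at each point the Weingarten map `dν` has an orthonormal pair of
tangent eigenvectors with eigenvalues `0` and `1/R`) is a round cylinder of
radius `R`: the set of points at distance `R` from a fixed straight line. -/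
theorem stmt_15 (f : EuclideanSpace ℝ (Fin 3) → ℝ) (hf : ContDiff ℝ (⊤ : ℕ∞) f)
    (M : Set (EuclideanSpace ℝ (Fin 3))) (hM : M = f ⁻¹' {0})
    (hne : M.Nonempty) (hconn : IsConnected M)
    (hreg : ∀ p ∈ M, gradient f p ≠ 0)
    (R : ℝ) (hR : 0 < R)
    (ν : EuclideanSpace ℝ (Fin 3) → EuclideanSpace ℝ (Fin 3))
    (hν : ∀ p, ν p = ‖gradient f p‖⁻¹ • gradient f p)
    (hcurv : ∀ p ∈ M, ∃ e₁ e₂ : EuclideanSpace ℝ (Fin 3),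
      ‖e₁‖ = 1 ∧ ‖e₂‖ = 1 ∧ ⟪e₁, e₂⟫ = 0 ∧ ⟪e₁, ν p⟫ = 0 ∧ ⟪e₂, ν p⟫ = 0 ∧
      fderiv ℝ ν p e₁ = 0 ∧ fderiv ℝ ν p e₂ = R⁻¹ • e₂) :
    ∃ (a d : EuclideanSpace ℝ (Fin 3)), ‖d‖ = 1 ∧
      M = {p | Metric.infDist p {x | ∃ t : ℝ, x = a + t • d} = R} := by
  obtain rfl : ν = unitNormal f := funext hν
  subst hM
  have hE : Module.finrank ℝ (EuclideanSpace ℝ (Fin 3)) = 3 := finrank_euclideanSpace_fin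
  have hframe : ∀ q, f q = 0 → ∃ e₁ e₂, IsPrincipalFrame R⁻¹ (unitNormal f) q e₁ e₂ := by
    intro q hq
    obtain ⟨e₁, e₂, h₁, h₂, h₁₂, hν₁, hν₂, hS₁, hS₂⟩ := hcurv q hq
    exact ⟨e₁, e₂, orthonormal_vecCons_three (norm_unitNormal (hreg q hq)) h₁ h₂ h₁₂ hν₁ hν₂,
      hS₁, hS₂⟩
  obtain ⟨p, hp⟩ := hne
  obtain ⟨e₁, e₂, h⟩ := hframe p hp
  refine ⟨p - R • unitNormal f p, e₁, h.orthonormal.1 1, ?_⟩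
  rw [← coe_mk'_span_singleton, ← h.relativeNullity_eq hE (inv_ne_zero hR.ne')]
  refine stmt_15_general f (hf.of_le (WithTop.coe_le_coe.2 le_top)) hconn.isPreconnected hreg hR
    (fun q hq ↦ ?_) hp ⟨e₂, h.inner_normal_right, h.fderiv_right_ne_zero (inv_ne_zero hR.ne')⟩
  obtain ⟨_, _, h'⟩ := hframe q hq
  exact h'.hasCurvaturesZeroOr hE
end
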